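/- Suppose B = 0, i.e. Y has i.i.d. N(0, σ²) entries (the global null hypothesis). Then the Kac–Rice statistic S_{1,0} = (∫_{d₁}^{∞} e^{−z²/(2σ²)} z^{N−p} ∏_{j=2}^{p} (z² − d_j²) dz) / (∫_{d₂}^{∞} e^{−z²/(2σ²)} z^{N−p} ∏_{j=2}^{p} (z² − d_j²) dz) is uniformly distributed on (0,1). -/

import Mathlib

open MeasureTheory ProbabilityTheory Matrix


theorem kr_lintegral_prod {α : Type*} [MeasurableSpace α] (μ : Measure α) [SigmaFinite μ] (n : ℕ)
    (f : Fin n → α → ENNReal) (hf : ∀ i, Measurable (f i)) :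
    ∫⁻ x, ∏ i, f i (x i) ∂Measure.pi (fun _ : Fin n => μ) = ∏ i, ∫⁻ x, f i x ∂μ := by
  induction n with
  | zero => simp
  | succ n ih =>
    have e := (measurePreserving_piFinSuccAbove (fun _ : Fin (n+1) => μ) 0).symm
    have hm : Measurable (fun x : Fin (n + 1) → α => ∏ i, f i (x i)) :=
      Finset.measurable_prod _ (fun i _ => (hf i).comp (measurable_pi_apply i))
    rw [← e.lintegral_comp hm]
    simp only [Fin.prod_univ_succ, MeasurableEquiv.piFinSuccAbove_symm_apply]
    simp only [Fin.insertNthEquiv_apply, Fin.insertNth_zero, Fin.cons_zero, Fin.cons_succ, cast_eq]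
    rw [lintegral_prod_mul (f := f 0) (g := fun y : Fin n → α => ∏ i, f i.succ (y i)) (hf 0).aemeasurable
      (Finset.measurable_prod _ (fun i _ => (hf i.succ).comp (measurable_pi_apply i))).aemeasurable]
    rw [ih _ (fun i => hf i.succ)]

theorem kr_pi_withDensity {α : Type*} [MeasurableSpace α] (μ : Measure α) [SigmaFinite μ] (n : ℕ)
    (f : α → ENNReal) (hf : Measurable f) [SigmaFinite (μ.withDensity f)] :
    Measure.pi (fun _ : Fin n => μ.withDensity f) =
      (Measure.pi (fun _ : Fin n => μ)).withDensity (fun x => ∏ i, f (x i)) := by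
  refine Measure.pi_eq fun s hs => ?_
  rw [withDensity_apply _ (MeasurableSet.univ_pi hs), ← lintegral_indicator (MeasurableSet.univ_pi hs)]
  have : (fun x : Fin n → α => (Set.univ.pi s).indicator (fun x => ∏ i, f (x i)) x) =
      fun x => ∏ i, (s i).indicator f (x i) := by
    ext x
    by_cases h : x ∈ Set.univ.pi s
    · rw [Set.indicator_of_mem h]
      exact Finset.prod_congr rfl fun i _ => by rw [Set.indicator_of_mem (h i trivial)]
    · rw [Set.indicator_of_notMem h]
      simp only [Set.mem_univ_pi, not_forall] at h
      obtain ⟨i, hi⟩ := h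
      exact (Finset.prod_eq_zero (Finset.mem_univ i) (by rw [Set.indicator_of_notMem hi])).symm
  rw [this, kr_lintegral_prod μ n _ (fun i => hf.indicator (hs i))]
  exact Finset.prod_congr rfl fun i _ => by
    rw [withDensity_apply _ (hs i), lintegral_indicator (hs i)]

theorem kr_gauss (N p : ℕ) (σ : ℝ) (hσ : 0 < σ) : ∃ c : ℝ, 0 < c ∧
    Measure.pi (fun _ : Fin N => Measure.pi (fun _ : Fin p =>
        gaussianReal 0 ⟨σ ^ 2, sq_nonneg σ⟩)) =
    (volume : Measure (Fin N → Fin p → ℝ)).withDensity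
      (fun y => ENNReal.ofReal (c * Real.exp (-(∑ i, ∑ j, y i j ^ 2) / (2 * σ ^ 2)))) := by
  set v : NNReal := ⟨σ ^ 2, sq_nonneg σ⟩ with hv
  have hv0 : v ≠ 0 := by
    intro h
    have := congrArg NNReal.toReal h
    have h2 : σ ^ 2 = 0 := this
    exact hσ.ne' (by simpa using h2)
  have hvv : (v : ℝ) = σ ^ 2 := rfl
  have h1 : gaussianReal 0 v = volume.withDensity (gaussianPDF 0 v) := gaussianReal_of_var_ne_zero _ hv0
  have i1 : IsProbabilityMeasure (volume.withDensity (gaussianPDF 0 v)) := h1 ▸ inferInstance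
  have h2 := kr_pi_withDensity volume p (gaussianPDF 0 v) (measurable_gaussianPDF 0 v)
  have i2 : IsProbabilityMeasure ((Measure.pi (fun _ : Fin p => (volume : Measure ℝ))).withDensity
    (fun x => ∏ i, gaussianPDF 0 v (x i))) := h2 ▸ inferInstance
  have h3 := kr_pi_withDensity (Measure.pi (fun _ : Fin p => (volume : Measure ℝ))) N
    (fun x => ∏ i, gaussianPDF 0 v (x i))
    (Finset.measurable_prod _ (fun i _ => (measurable_gaussianPDF 0 v).comp (measurable_pi_apply i)))
  rw [h1, h2, h3]
  refine ⟨(√(2 * Real.pi * v))⁻¹ ^ (N * p), by rw [hvv]; positivity, ?_⟩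
  congr 1
  ext y
  simp only [gaussianPDF]
  have : ∀ i, ∏ j, ENNReal.ofReal (gaussianPDFReal 0 v (y i j)) = ENNReal.ofReal (∏ j, gaussianPDFReal 0 v (y i j)) :=
    fun i => (ENNReal.ofReal_prod_of_nonneg fun j _ => gaussianPDFReal_nonneg _ _ _).symm
  simp only [this]
  rw [← ENNReal.ofReal_prod_of_nonneg fun j _ => Finset.prod_nonneg fun j _ => gaussianPDFReal_nonneg _ _ _]
  congr 1
  simp only [gaussianPDFReal, Finset.prod_mul_distrib, ← Real.exp_sum, Finset.prod_const, Finset.card_univ, Fintype.card_fin]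
  rw [← pow_mul, mul_comm p N]
  congr 2
  simp only [sub_zero, hvv, ← Finset.sum_div, ← Finset.sum_neg_distrib]


structure KrSVD {m κ ρ : Type} [Fintype m] [Fintype κ] [Fintype ρ] [DecidableEq m] [DecidableEq κ]
    [DecidableEq ρ] (Y : m → κ → ℝ) (s : κ → ℝ) (U : Matrix m (κ ⊕ ρ) ℝ) (V : Matrix κ κ ℝ) : Prop where
  uu : Uᵀ * U = 1
  uu' : U * Uᵀ = 1
  vv : Vᵀ * V = 1
  vv' : V * Vᵀ = 1
  eq : Matrix.of Y = U * (Matrix.fromRows (Matrix.diagonal s) 0 : Matrix (κ ⊕ ρ) κ ℝ) * Vᵀ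

structure KrSV {m : Type} [Fintype m] {p : ℕ} (Y : m → Fin p → ℝ) (s : Fin p → ℝ) : Prop where
  anti : Antitone s
  nonneg : ∀ i, 0 ≤ s i
  det : ∀ z : ℝ, (z • (1 : Matrix (Fin p) (Fin p) ℝ) - (Matrix.of Y)ᵀ * Matrix.of Y).det = ∏ i, (z - s i ^ 2)

theorem kr_sv_of_gram {m : Type} [Fintype m] {p : ℕ} {Y : m → Fin p → ℝ} {s : Fin p → ℝ}
    (h1 : Antitone s) (h2 : ∀ i, 0 ≤ s i) (V : Matrix (Fin p) (Fin p) ℝ) (hV : Vᵀ * V = 1)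
    (h : (Matrix.of Y)ᵀ * Matrix.of Y = V * Matrix.diagonal (fun i => s i ^ 2) * Vᵀ) : KrSV Y s := by
  refine ⟨h1, h2, fun z => ?_⟩
  have hV' : V * Vᵀ = 1 := mul_eq_one_comm.mp hV
  have : z • (1 : Matrix (Fin p) (Fin p) ℝ) - (Matrix.of Y)ᵀ * Matrix.of Y =
      V * Matrix.diagonal (fun i => z - s i ^ 2) * Vᵀ := by
    have e : Matrix.diagonal (fun i => z - s i ^ 2) = z • (1 : Matrix (Fin p) (Fin p) ℝ) - Matrix.diagonal (fun i => s i ^ 2) := by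
      ext i j
      by_cases hij : i = j
      · subst hij; simp
      · simp [hij]
    rw [h, e, mul_sub, sub_mul]
    simp [hV']
  rw [this, det_mul, det_mul, det_diagonal, mul_comm, ← mul_assoc, ← det_mul, hV]
  simp

theorem kr_sv_unique {m : Type} [Fintype m] {p : ℕ} {Y : m → Fin p → ℝ} {s s' : Fin p → ℝ}
    (h : KrSV Y s) (h' : KrSV Y s') : s = s' := by
  have hp : (∏ i, (Polynomial.X - Polynomial.C (s i ^ 2))) = ∏ i, (Polynomial.X - Polynomial.C (s' i ^ 2)) := by
    apply Polynomial.funext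
    intro z
    simp only [Polynomial.eval_prod, Polynomial.eval_sub, Polynomial.eval_X, Polynomial.eval_C]
    rw [← h.det, ← h'.det]
  have hr := congrArg Polynomial.roots hp
  have hrt : ∀ t : Fin p → ℝ, (∏ i, (Polynomial.X - Polynomial.C (t i ^ 2))).roots =
      (List.ofFn (fun i => t i ^ 2) : Multiset ℝ) := by
    intro t
    rw [← Polynomial.roots_multiset_prod_X_sub_C (List.ofFn (fun i => t i ^ 2) : Multiset ℝ)]
    congr 1
    simp [Multiset.map_coe, List.map_ofFn, List.prod_ofFn]
  rw [hrt, hrt, Multiset.coe_eq_coe] at hr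
  have hs : ∀ t : Fin p → ℝ, Antitone t → (∀ i, 0 ≤ t i) → (List.ofFn (fun i => t i ^ 2)).SortedGE := by
    intro t ht ht0
    apply Antitone.sortedGE_ofFn
    intro i j hij
    exact pow_le_pow_left₀ (ht0 _) (ht hij) 2
  have he := hr.eq_of_sortedGE (hs s h.anti h.nonneg) (hs s' h'.anti h'.nonneg)
  have := List.ofFn_injective he
  ext i
  have hi := congrFun this i
  exact (pow_left_inj₀ (h.nonneg i) (h'.nonneg i) two_ne_zero).mp hi

theorem kr_svd_gram {m : Type} {p : ℕ} {ρ : Type} [Fintype m] [DecidableEq m] [Fintype ρ] [DecidableEq ρ] 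
    {Y : m → Fin p → ℝ} {s : Fin p → ℝ} {U : Matrix m (Fin p ⊕ ρ) ℝ} {V : Matrix (Fin p) (Fin p) ℝ}
    (h1 : Antitone s) (h2 : ∀ i, 0 ≤ s i) (h : KrSVD Y s U V) : KrSV Y s := by
  refine kr_sv_of_gram h1 h2 V h.vv ?_
  rw [h.eq]
  simp only [transpose_mul, transpose_transpose, Matrix.mul_assoc]
  rw [← Matrix.mul_assoc Uᵀ, h.uu, Matrix.one_mul, ← Matrix.mul_assoc _ _ Vᵀ, transpose_fromRows, fromCols_mul_fromRows]
  simp [pow_two]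

theorem kr_thin_sv {m : Type} {p : ℕ} [Fintype m]
    {Y : m → Fin p → ℝ} {s : Fin p → ℝ} {U : Matrix m (Fin p) ℝ} {V : Matrix (Fin p) (Fin p) ℝ}
    (h1 : Antitone s) (h2 : ∀ i, 0 ≤ s i) (h : Matrix.of Y = U * Matrix.diagonal s * Vᵀ)
    (hU : Uᵀ * U = 1) (hV : Vᵀ * V = 1) : KrSV Y s := by
  refine kr_sv_of_gram h1 h2 V hV ?_
  rw [h]
  simp only [transpose_mul, transpose_transpose, Matrix.mul_assoc]
  rw [← Matrix.mul_assoc Uᵀ, hU, Matrix.one_mul, ← Matrix.mul_assoc _ _ Vᵀ]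
  simp [pow_two]


theorem kr_svd_exists {N p : ℕ} (hNp : p ≤ N) (Y : Fin N → Fin p → ℝ) :
    ∃ (s : Fin p → ℝ) (U : Matrix (Fin N) (Fin p ⊕ Fin (N - p)) ℝ) (V : Matrix (Fin p) (Fin p) ℝ),
      Antitone s ∧ (∀ i, 0 ≤ s i) ∧ KrSVD Y s U V := by
  set A : EuclideanSpace ℝ (Fin p) →ₗ[ℝ] EuclideanSpace ℝ (Fin N) := Matrix.toEuclideanLin (Matrix.of Y) with hA
  have hn : Module.finrank ℝ (EuclideanSpace ℝ (Fin p)) = p := by simp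
  have hT := A.isSymmetric_adjoint_comp_self
  set v := hT.eigenvectorBasis hn with hv
  set s : Fin p → ℝ := fun i => A.singularValues i with hs
  have hsq : ∀ i, s i ^ 2 = hT.eigenvalues hn i := fun i => A.sq_singularValues_fin hn i
  have hTv : ∀ i, (LinearMap.adjoint A ∘ₗ A) (v i) = (s i ^ 2) • v i := by
    intro i
    rw [hsq]
    exact hT.apply_eigenvectorBasis hn i
  have hin : ∀ i j, inner ℝ (A (v i)) (A (v j)) = if i = j then s j ^ 2 else 0 := by
    intro i j
    rw [← LinearMap.adjoint_inner_right]
    have := hTv j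
    simp only [LinearMap.comp_apply] at this
    rw [this, inner_smul_right, orthonormal_iff_ite.mp v.orthonormal]
    simp
  set w : Fin p ⊕ Fin (N - p) → EuclideanSpace ℝ (Fin N) := Sum.elim (fun i => (s i)⁻¹ • A (v i)) 0 with hw
  set S : Set (Fin p ⊕ Fin (N - p)) := {x | ∃ i, x = Sum.inl i ∧ s i ≠ 0} with hS
  have how : Orthonormal ℝ (S.domRestrict w) := by
    rw [orthonormal_iff_ite]
    rintro ⟨_, i, rfl, hi⟩ ⟨_, j, rfl, hj⟩
    simp only [Set.domRestrict_apply, hw, Sum.elim_inl, inner_smul_left, inner_smul_right, hin]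
    by_cases hij : i = j
    · subst hij
      simp
      field_simp
    · simp [hij]
  obtain ⟨b, hb⟩ := how.exists_orthonormalBasis_extension_of_card_eq (by simp; omega)
  have hAb : ∀ j, A (v j) = s j • b (Sum.inl j) := by
    intro j
    by_cases hj : s j = 0
    · have := hin j j
      simp [hj] at this
      rw [this, hj, zero_smul]
    · rw [hb _ ⟨j, rfl, hj⟩]
      simp [hw, smul_smul, hj]
  refine ⟨s, Matrix.of fun i k => b k i, Matrix.of fun i k => v k i, ?_, fun i => A.singularValues_nonneg i, ?_⟩
  · intro i j hij
    exact A.singularValues_antitone hij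
  have huu : (Matrix.of fun i k => b k i)ᵀ * (Matrix.of fun i k => b k i) = (1 : Matrix _ _ ℝ) := by
    ext i j
    have := orthonormal_iff_ite.mp b.orthonormal i j
    rw [PiLp.inner_apply] at this
    simp only [Matrix.mul_apply, Matrix.transpose_apply, Matrix.of_apply, Matrix.one_apply]
    rw [← this]
    exact Finset.sum_congr rfl fun x _ => by simp [mul_comm]
  have hvv : (Matrix.of fun i k => v k i)ᵀ * (Matrix.of fun i k => v k i) = (1 : Matrix _ _ ℝ) := by
    ext i j
    have := orthonormal_iff_ite.mp v.orthonormal i j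
    rw [PiLp.inner_apply] at this
    simp only [Matrix.mul_apply, Matrix.transpose_apply, Matrix.of_apply, Matrix.one_apply]
    rw [← this]
    exact Finset.sum_congr rfl fun x _ => by simp [mul_comm]
  have hvv' := mul_eq_one_comm.mp hvv
  refine ⟨huu, (Matrix.mul_eq_one_comm_of_card_eq _ _ _ (by simp; omega)).mp huu, hvv, hvv', ?_⟩
  have key : Matrix.of Y * (Matrix.of fun i k => v k i) =
      (Matrix.of fun i k => b k i) * (Matrix.fromRows (Matrix.diagonal s) 0 : Matrix (Fin p ⊕ Fin (N - p)) (Fin p) ℝ) := by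
    ext i j
    have := congrArg (fun x => x i) (hAb j)
    simp [hA, Matrix.mulVec, dotProduct] at this
    simp [Matrix.mul_apply, this, Matrix.diagonal_apply, mul_comm]
  rw [← key, Matrix.mul_assoc, hvv', Matrix.mul_one]

open Filter Topology in
theorem kr_mul_deriv {E : Type*} [NormedAddCommGroup E] [NormedSpace ℝ E] {f c : E → ℝ} {f' : E →L[ℝ] ℝ}
    {Y : E} {c0 : ℝ} (hf : HasFDerivAt f f' Y) (h0 : f Y = 0) (hc : Tendsto c (𝓝 Y) (𝓝 c0)) :
    HasFDerivAt (fun x => c x * f x) (c0 • f') Y := by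
  rw [hasFDerivAt_iff_isLittleO] at *
  have h1 : f =O[𝓝 Y] (fun x => x - Y) := by
    have := hf.isBigO.add (f'.isBigO_comp (fun x => x - Y) (𝓝 Y))
    simpa [h0] using this
  have h2 : (fun x => c x - c0) =o[𝓝 Y] (fun _ => (1 : ℝ)) := by
    rw [Asymptotics.isLittleO_one_iff]
    simpa using hc.sub_const c0
  have h3 := (h2.mul_isBigO h1.norm_right).norm_right
  simp only [one_mul, norm_norm] at h3
  have h4 := (h3.of_norm_right).add (hf.const_mul_left c0)
  refine h4.congr_left fun x => ?_
  simp [h0]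
  ring

section
variable {κ ρ : Type} [Fintype κ] [Fintype ρ] [DecidableEq κ] [DecidableEq ρ]

/-- coordinate functional -/
noncomputable def krC (i : κ ⊕ ρ) (j : κ) : ((κ ⊕ ρ) → κ → ℝ) →L[ℝ] ℝ :=
  (ContinuousLinearMap.proj j : (κ → ℝ) →L[ℝ] ℝ).comp
    (ContinuousLinearMap.proj i : ((κ ⊕ ρ) → κ → ℝ) →L[ℝ] (κ → ℝ))

theorem krC_apply (i : κ ⊕ ρ) (j : κ) (M : (κ ⊕ ρ) → κ → ℝ) : krC i j M = M i j := rfl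

noncomputable def krAlpha (s : κ → ℝ) (k0 : κ) (i : κ ⊕ ρ) : ((κ ⊕ ρ) → κ → ℝ) →L[ℝ] ℝ :=
  Sum.elim (fun i => if i = k0 then 0 else
      (s k0 ^ 2 - s i ^ 2)⁻¹ • (s k0 • krC (Sum.inl i) k0 + s i • krC (Sum.inl k0) i))
    (fun r => (s k0)⁻¹ • krC (Sum.inr r) k0) i

noncomputable def krBeta (s : κ → ℝ) (k0 : κ) (j : κ) : ((κ ⊕ ρ) → κ → ℝ) →L[ℝ] ℝ :=
  if j = k0 then 0 else
      (s k0 ^ 2 - s j ^ 2)⁻¹ • (s k0 • krC (Sum.inl k0) j + s j • krC (Sum.inl j) k0)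

noncomputable def krD (s : κ → ℝ) (k0 : κ) : ((κ ⊕ ρ) → κ → ℝ) →L[ℝ] ((κ ⊕ ρ) → κ → ℝ) :=
  ContinuousLinearMap.pi fun i => ContinuousLinearMap.pi fun j =>
    (if j = k0 then krAlpha s k0 i else 0) + (if i = Sum.inl k0 then krBeta s k0 j else 0)

open Filter Topology in
theorem kr_deriv_ab {E : Type*} [NormedAddCommGroup E] [NormedSpace ℝ E]
    (hh : E →L[ℝ] ((κ ⊕ ρ) → κ → ℝ)) (s : κ → ℝ) (k0 : κ) (h0 : 0 < s k0)
    (hs0 : ∀ j, 0 ≤ s j) (hs : ∀ j, j ≠ k0 → s j < s k0) (Y : E)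
    (a : E → κ ⊕ ρ → ℝ) (b : E → κ → ℝ) (τ : E → ℝ)
    (e1 : ∀ X j, ∑ l, hh (X - Y) (Sum.inl j) l * b X l + s j * b X j = τ X * a X (Sum.inl j))
    (e2 : ∀ X r, ∑ l, hh (X - Y) (Sum.inr r) l * b X l = τ X * a X (Sum.inr r))
    (e3 : ∀ X j, ∑ i, hh (X - Y) i j * a X i + s j * a X (Sum.inl j) = τ X * b X j)
    (ha : ∀ X, ∑ i, a X i ^ 2 = 1) (hb : ∀ X, ∑ j, b X j ^ 2 = 1)
    (hpos : ∀ X, 0 ≤ b X k0)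
    (hτ : Tendsto τ (𝓝 Y) (𝓝 (s k0))) :
    HasFDerivAt (fun X => fun (i : κ ⊕ ρ) (j : κ) => a X i * b X j) ((krD s k0).comp hh) Y := by
  have ba : ∀ X i, |a X i| ≤ 1 := fun X i => by
    rw [abs_le_one_iff_mul_self_le_one, ← pow_two, ← ha X]
    exact Finset.single_le_sum (f := fun i => a X i ^ 2) (fun i _ => sq_nonneg _) (Finset.mem_univ i)
  have bb : ∀ X i, |b X i| ≤ 1 := fun X i => by
    rw [abs_le_one_iff_mul_self_le_one, ← pow_two, ← hb X]
    exact Finset.single_le_sum (f := fun i => b X i ^ 2) (fun i _ => sq_nonneg _) (Finset.mem_univ i)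
  have hℓ : ∀ i j, HasFDerivAt (fun X => hh (X - Y) i j) ((krC i j).comp hh) Y := by
    intro i j
    have := (((krC i j).comp hh).hasFDerivAt (x := Y)).sub_const (((krC i j).comp hh) Y)
    refine this.congr_of_eventuallyEq (Filter.Eventually.of_forall fun X => ?_)
    simp [krC_apply]
  have hℓ0 : ∀ i j, Tendsto (fun X => hh (X - Y) i j) (𝓝 Y) (𝓝 0) := by
    intro i j
    have := (hℓ i j).continuousAt.tendsto
    simpa using this
  have tz : ∀ (f g : E → ℝ), Tendsto f (𝓝 Y) (𝓝 0) → (∀ X, |g X| ≤ 1) → Tendsto (fun X => f X * g X) (𝓝 Y) (𝓝 0) := by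
    intro f g hf hg
    refine squeeze_zero_norm (fun X => ?_) (by simpa using hf.abs)
    rw [Real.norm_eq_abs, abs_mul]
    exact mul_le_of_le_one_right (abs_nonneg _) (hg X)
  set P : κ ⊕ ρ → E → ℝ := fun i X => ∑ l, hh (X - Y) i l * b X l with hP
  set Q : κ → E → ℝ := fun j X => ∑ i, hh (X - Y) i j * a X i with hQ
  have hP0 : ∀ i, Tendsto (P i) (𝓝 Y) (𝓝 0) := fun i => by
    simpa only [Finset.sum_const_zero] using tendsto_finsetSum Finset.univ (fun l _ => tz _ (fun X => b X l) (hℓ0 i l) (fun X => bb X l))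
  have hQ0 : ∀ i, Tendsto (Q i) (𝓝 Y) (𝓝 0) := fun j => by
    simpa only [Finset.sum_const_zero] using tendsto_finsetSum Finset.univ (fun l _ => tz _ (fun X => a X l) (hℓ0 l j) (fun X => ba X l))
  have hPY : ∀ i, P i Y = 0 := fun i => by simp [hP]
  have hQY : ∀ i, Q i Y = 0 := fun i => by simp [hQ]
  have hΔ : ∀ j, j ≠ k0 → 0 < s k0 ^ 2 - s j ^ 2 := fun j hj => by
    nlinarith [hs j hj, hs0 j]
  have htΔ : ∀ j, Tendsto (fun X => τ X ^ 2 - s j ^ 2) (𝓝 Y) (𝓝 (s k0 ^ 2 - s j ^ 2)) :=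
    fun j => (hτ.pow 2).sub_const _
  have evτ : ∀ᶠ X in 𝓝 Y, 0 < τ X := hτ.eventually (lt_mem_nhds h0)
  have evΔ : ∀ j, j ≠ k0 → ∀ᶠ X in 𝓝 Y, 0 < τ X ^ 2 - s j ^ 2 := fun j hj =>
    (htΔ j).eventually (lt_mem_nhds (hΔ j hj))
  have fa : ∀ j, j ≠ k0 → ∀ᶠ X in 𝓝 Y, a X (Sum.inl j) =
      (τ X ^ 2 - s j ^ 2)⁻¹ * (τ X * P (Sum.inl j) X + s j * Q j X) := by
    intro j hj
    filter_upwards [evΔ j hj] with X hX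
    rw [eq_inv_mul_iff_mul_eq₀ hX.ne']
    have h1 := e1 X j
    have h3 := e3 X j
    simp only [hP, hQ]
    linear_combination (-τ X) * h1 - s j * h3
  have fb : ∀ j, j ≠ k0 → ∀ᶠ X in 𝓝 Y, b X j =
      (τ X ^ 2 - s j ^ 2)⁻¹ * (τ X * Q j X + s j * P (Sum.inl j) X) := by
    intro j hj
    filter_upwards [evΔ j hj] with X hX
    rw [eq_inv_mul_iff_mul_eq₀ hX.ne']
    have h1 := e1 X j
    have h3 := e3 X j
    simp only [hP, hQ]
    linear_combination (-s j) * h1 - τ X * h3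
  have fr : ∀ r, ∀ᶠ X in 𝓝 Y, a X (Sum.inr r) = (τ X)⁻¹ * P (Sum.inr r) X := by
    intro r
    filter_upwards [evτ] with X hX
    rw [eq_inv_mul_iff_mul_eq₀ hX.ne']
    exact (e2 X r).symm
  have la : ∀ j, j ≠ k0 → Tendsto (fun X => a X (Sum.inl j)) (𝓝 Y) (𝓝 0) := by
    intro j hj
    refine Tendsto.congr' ((fa j hj).mono fun X h => h.symm) ?_
    simpa using ((htΔ j).inv₀ (hΔ j hj).ne').mul ((hτ.mul (hP0 (Sum.inl j))).add ((hQ0 j).const_mul (s j)))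
  have lb : ∀ j, j ≠ k0 → Tendsto (fun X => b X j) (𝓝 Y) (𝓝 0) := by
    intro j hj
    refine Tendsto.congr' ((fb j hj).mono fun X h => h.symm) ?_
    simpa using ((htΔ j).inv₀ (hΔ j hj).ne').mul ((hτ.mul (hQ0 j)).add ((hP0 (Sum.inl j)).const_mul (s j)))
  have lr : ∀ r, Tendsto (fun X => a X (Sum.inr r)) (𝓝 Y) (𝓝 0) := by
    intro r
    refine Tendsto.congr' ((fr r).mono fun X h => h.symm) ?_
    simpa using (hτ.inv₀ h0.ne').mul (hP0 (Sum.inr r))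
  have fb0 : ∀ X, b X k0 = √(1 - ∑ j ∈ Finset.univ.erase k0, b X j ^ 2) := by
    intro X
    rw [← hb X, ← Finset.add_sum_erase _ _ (Finset.mem_univ k0), add_sub_cancel_right, Real.sqrt_sq (hpos X)]
  have lb0 : Tendsto (fun X => b X k0) (𝓝 Y) (𝓝 1) := by
    simp only [fb0]
    have : Tendsto (fun X => ∑ j ∈ Finset.univ.erase k0, b X j ^ 2) (𝓝 Y) (𝓝 (∑ j ∈ Finset.univ.erase k0, 0)) :=
      tendsto_finsetSum _ (fun j hj => by simpa using (lb j (Finset.ne_of_mem_erase hj)).pow 2)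
    simpa using (this.const_sub 1).sqrt
  have fa0 : ∀ᶠ X in 𝓝 Y, a X (Sum.inl k0) = (τ X)⁻¹ * (P (Sum.inl k0) X + s k0 * b X k0) := by
    filter_upwards [evτ] with X hX
    rw [eq_inv_mul_iff_mul_eq₀ hX.ne']
    exact (e1 X k0).symm
  have la0 : Tendsto (fun X => a X (Sum.inl k0)) (𝓝 Y) (𝓝 1) := by
    refine Tendsto.congr' (fa0.mono fun X h => h.symm) ?_
    have := (hτ.inv₀ h0.ne').mul ((hP0 (Sum.inl k0)).add (lb0.const_mul (s k0)))
    simpa [h0.ne'] using this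
  have La : ∀ i, Tendsto (fun X => a X i) (𝓝 Y) (𝓝 (if i = Sum.inl k0 then 1 else 0)) := by
    rintro (j | r)
    · by_cases hj : j = k0
      · subst hj; simpa using la0
      · simpa [hj] using la j hj
    · simpa using lr r
  have Lb : ∀ j, Tendsto (fun X => b X j) (𝓝 Y) (𝓝 (if j = k0 then 1 else 0)) := by
    intro j
    by_cases hj : j = k0
    · subst hj; simpa using lb0
    · simpa [hj] using lb j hj
  have vY : ∀ (f : E → ℝ) (c : ℝ), Tendsto f (𝓝 Y) (𝓝 c) → f Y = c := fun f c h =>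
    tendsto_nhds_unique (tendsto_pure_nhds f Y) (h.mono_left (pure_le_nhds Y))
  have dP : ∀ i, HasFDerivAt (P i) ((krC i k0).comp hh) Y := by
    intro i
    have := HasFDerivAt.fun_sum (u := Finset.univ) (fun l _ => kr_mul_deriv (hℓ i l) (by simp) (Lb l))
    simp only [ite_smul, one_smul, zero_smul, Finset.sum_ite_eq', Finset.mem_univ, if_true] at this
    simpa only [hP, mul_comm] using this
  have dQ : ∀ j, HasFDerivAt (Q j) ((krC (Sum.inl k0) j).comp hh) Y := by
    intro j
    have := HasFDerivAt.fun_sum (u := Finset.univ) (fun i _ => kr_mul_deriv (hℓ i j) (by simp) (La i))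
    simp only [ite_smul, one_smul, zero_smul, Finset.sum_ite_eq', Finset.mem_univ, if_true] at this
    simpa only [hQ, mul_comm] using this
  have da1 : ∀ j, j ≠ k0 → HasFDerivAt (fun X => a X (Sum.inl j)) ((krAlpha s k0 (Sum.inl j)).comp hh) Y := by
    intro j hj
    refine HasFDerivAt.congr_of_eventuallyEq ?_ (fa j hj)
    have := kr_mul_deriv ((kr_mul_deriv (dP (Sum.inl j)) (hPY _) hτ).add ((dQ j).const_mul (s j)))
      (by simp [hPY, hQY]) ((htΔ j).inv₀ (hΔ j hj).ne')
    refine this.congr_fderiv ?_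
    ext X
    simp [krAlpha, hj]
  have da2 : ∀ r, HasFDerivAt (fun X => a X (Sum.inr r)) ((krAlpha s k0 (Sum.inr r)).comp hh) Y := by
    intro r
    refine HasFDerivAt.congr_of_eventuallyEq ?_ (fr r)
    have := kr_mul_deriv (dP (Sum.inr r)) (hPY _) (hτ.inv₀ h0.ne')
    refine this.congr_fderiv ?_
    ext X
    simp [krAlpha]
  have db1 : ∀ j, j ≠ k0 → HasFDerivAt (fun X => b X j) ((krBeta s k0 j).comp hh) Y := by
    intro j hj
    refine HasFDerivAt.congr_of_eventuallyEq ?_ (fb j hj)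
    have := kr_mul_deriv ((kr_mul_deriv (dQ j) (hQY _) hτ).add ((dP (Sum.inl j)).const_mul (s j)))
      (by simp [hPY, hQY]) ((htΔ j).inv₀ (hΔ j hj).ne')
    refine this.congr_fderiv ?_
    ext X
    simp [krBeta, hj]
  have sq0 : ∀ (f : E → ℝ) (f' : E →L[ℝ] ℝ), f Y = 0 → HasFDerivAt f f' Y → HasFDerivAt (fun X => f X ^ 2) (0 : E →L[ℝ] ℝ) Y := by
    intro f f' h hf
    have := hf.pow 2
    simpa [h] using this
  have db0 : HasFDerivAt (fun X => b X k0) ((krBeta s k0 k0).comp hh) Y := by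
    simp only [fb0, krBeta, if_true]
    have h1 : HasFDerivAt (fun X => ∑ j ∈ Finset.univ.erase k0, b X j ^ 2) (∑ j ∈ Finset.univ.erase k0, (0 : E →L[ℝ] ℝ)) Y :=
      HasFDerivAt.fun_sum (fun j hj => sq0 _ _ (vY _ _ (lb j (Finset.ne_of_mem_erase hj))) (db1 j (Finset.ne_of_mem_erase hj)))
    have h2 := (h1.const_sub 1).sqrt (by
      intro h
      have := fb0 Y
      rw [h, Real.sqrt_zero, vY _ _ lb0] at this
      exact one_ne_zero this)
    simpa using h2
  have da0 : HasFDerivAt (fun X => a X (Sum.inl k0)) ((krAlpha s k0 (Sum.inl k0)).comp hh) Y := by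
    have fa00 : ∀ᶠ X in 𝓝 Y, a X (Sum.inl k0) = √(1 - ∑ j ∈ Finset.univ.erase (Sum.inl k0), a X j ^ 2) := by
      filter_upwards [la0.eventually (lt_mem_nhds one_pos)] with X hX
      rw [← ha X, ← Finset.add_sum_erase _ _ (Finset.mem_univ (Sum.inl k0)), add_sub_cancel_right, Real.sqrt_sq hX.le]
    refine HasFDerivAt.congr_of_eventuallyEq ?_ fa00
    have h1 : HasFDerivAt (fun X => ∑ j ∈ Finset.univ.erase (Sum.inl k0), a X j ^ 2) (∑ j ∈ Finset.univ.erase (Sum.inl k0 : κ ⊕ ρ), (0 : E →L[ℝ] ℝ)) Y := by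
      refine HasFDerivAt.fun_sum ?_
      rintro (j | r) hj
      · have hj' : j ≠ k0 := fun h => Finset.ne_of_mem_erase hj (by rw [h])
        exact sq0 _ _ (vY _ _ (la j hj')) (da1 j hj')
      · exact sq0 _ _ (vY _ _ (lr r)) (da2 r)
    have h2 := (h1.const_sub 1).sqrt (by
      intro h
      have := fa00.self_of_nhds
      rw [h, Real.sqrt_zero, vY _ _ la0] at this
      exact one_ne_zero this)
    simpa [krAlpha] using h2
  have da : ∀ i, HasFDerivAt (fun X => a X i) ((krAlpha s k0 i).comp hh) Y := by
    rintro (j | r)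
    · by_cases hj : j = k0
      · rw [hj]; exact da0
      · exact da1 j hj
    · exact da2 r
  have db : ∀ j, HasFDerivAt (fun X => b X j) ((krBeta s k0 j).comp hh) Y := by
    intro j
    by_cases hj : j = k0
    · rw [hj]; exact db0
    · exact db1 j hj
  rw [hasFDerivAt_pi']
  intro i
  rw [hasFDerivAt_pi']
  intro j
  have := (da i).mul (db j)
  refine this.congr_fderiv ?_
  ext X
  simp only [vY _ _ (La i), vY _ _ (Lb j)]
  simp [krD]
  split_ifs <;> simp [add_comm]
end


section
variable {κ ρ : Type} [Fintype κ] [Fintype ρ] [DecidableEq κ] [DecidableEq ρ]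

noncomputable def krQ (c : ℝ) (k0 : κ) : ((κ ⊕ ρ) → κ → ℝ) →ₗ[ℝ] ((κ ⊕ ρ) → κ → ℝ) where
  toFun M := fun i j => Sum.elim (fun i => if i = k0 then (if j = k0 then M (Sum.inl k0) k0 else
      c * (M (Sum.inl j) k0 - M (Sum.inl k0) j)) else (if j = k0 then c * (M (Sum.inl i) k0 + M (Sum.inl k0) i) else M (Sum.inl i) j))
      (fun r => M (Sum.inr r) j) i
  map_add' M M' := by
    ext (i | r) j
    · simp only [Sum.elim_inl, Pi.add_apply]; split_ifs <;> ring
    · simp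
  map_smul' a M := by
    ext (i | r) j
    · simp only [Sum.elim_inl, Pi.smul_apply, smul_eq_mul, RingHom.id_apply]; split_ifs <;> ring
    · simp

noncomputable def krLam (l : (κ ⊕ ρ) → κ → ℝ) : ((κ ⊕ ρ) → κ → ℝ) →ₗ[ℝ] ((κ ⊕ ρ) → κ → ℝ) :=
  LinearMap.pi fun i => (LinearMap.pi fun j => (l i j • (LinearMap.id : ℝ →ₗ[ℝ] ℝ)).comp (LinearMap.proj j)).comp (LinearMap.proj i)

theorem krLam_det (l : (κ ⊕ ρ) → κ → ℝ) : LinearMap.det (krLam l) = ∏ i, ∏ j, l i j := by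
  unfold krLam
  rw [LinearMap.det_pi]
  refine Finset.prod_congr rfl fun i _ => ?_
  rw [LinearMap.det_pi]
  simp

theorem krQ_det (k0 : κ) : LinearMap.det (krQ (ρ := ρ) 1 k0) ≠ 0 := by
  have : (krQ (ρ := ρ) 1 k0) ∘ₗ (krQ (1/2) k0) = LinearMap.id := by
    apply LinearMap.ext
    intro M
    ext i j
    simp only [LinearMap.comp_apply, LinearMap.id_apply]
    rcases i with i | r
    · by_cases hi : i = k0
      · subst hi
        by_cases hj : j = i
        · subst hj
          simp [krQ]
        · simp [krQ, hj]
          ring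
      · by_cases hj : j = k0
        · subst hj
          simp [krQ, hi]
          ring
        · simp [krQ, hi, hj]
    · simp [krQ]
  have h := congrArg LinearMap.det this
  rw [LinearMap.det_comp, LinearMap.det_id] at h
  exact left_ne_zero_of_mul_eq_one h

theorem krD_apply (s : κ → ℝ) (k0 : κ) (M : (κ ⊕ ρ) → κ → ℝ) (i j) : krD s k0 M i j = 
    (if j = k0 then krAlpha s k0 i M else 0) + (if i = Sum.inl k0 then krBeta s k0 j M else 0) := by
  simp [krD]
  split_ifs <;> simp

theorem kr_det (s : κ → ℝ) (k0 : κ) (h0 : 0 < s k0) (hs0 : ∀ j, 0 ≤ s j) (hs : ∀ j, j ≠ k0 → s j < s k0) (t : ℝ) :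
    LinearMap.det (LinearMap.id + t • (krD (ρ := ρ) s k0 : ((κ ⊕ ρ) → κ → ℝ) →ₗ[ℝ] ((κ ⊕ ρ) → κ → ℝ))) *
      (s k0 ^ Fintype.card ρ * ∏ j ∈ Finset.univ.erase k0, (s k0 ^ 2 - s j ^ 2)) =
      ((s k0 + t) ^ Fintype.card ρ * ∏ j ∈ Finset.univ.erase k0, ((s k0 + t) ^ 2 - s j ^ 2)) := by
  have p1 : ∀ j, j ≠ k0 → s k0 - s j ≠ 0 := fun j hj => (sub_pos.2 (hs j hj)).ne'
  have p2 : ∀ j, s k0 + s j ≠ 0 := fun j => (add_pos_of_pos_of_nonneg h0 (hs0 j)).ne'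
  have p3 : ∀ j, s k0 ^ 2 - s j ^ 2 = (s k0 - s j) * (s k0 + s j) := fun j => by ring
  set al : κ → ℝ := fun i => if i = k0 then 1 else 1 + t / (s k0 - s i) with hal
  set be : κ → ℝ := fun i => if i = k0 then 1 else 1 + t / (s k0 + s i) with hbe
  set l : (κ ⊕ ρ) → κ → ℝ := fun i j => Sum.elim (fun i => (if j = k0 then al i else 1) * (if i = k0 then be j else 1))
    (fun _ => if j = k0 then 1 + t / s k0 else 1) i with hl
  have hcomp : (LinearMap.id + t • (krD (ρ := ρ) s k0 : ((κ ⊕ ρ) → κ → ℝ) →ₗ[ℝ] ((κ ⊕ ρ) → κ → ℝ))) ∘ₗ krQ 1 k0 =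
      krQ 1 k0 ∘ₗ krLam l := by
    apply LinearMap.ext
    intro M
    ext i j
    simp only [LinearMap.comp_apply, LinearMap.add_apply, LinearMap.id_apply, LinearMap.smul_apply,
      ContinuousLinearMap.coe_coe, Pi.add_apply, Pi.smul_apply, krD_apply, smul_eq_mul]
    rcases i with i | r
    · by_cases hi : i = k0
      · subst hi
        by_cases hj : j = i
        · subst hj
          simp [krAlpha, krBeta, krQ, krLam, hl, hal, hbe]
        · have := p1 j hj
          have := p2 j
          have h1 := p3 j
          simp [krBeta, krQ, krLam, hl, hal, hbe, hj, krC_apply, h1]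
          field_simp
          ring
      · by_cases hj : j = k0
        · subst hj
          have := p1 i hi
          have := p2 i
          have h1 := p3 i
          simp [krAlpha, krQ, krLam, hl, hal, hbe, hi, krC_apply, h1]
          field_simp
          ring
        · simp [krQ, krLam, hl, hi, hj]
    · by_cases hj : j = k0
      · subst hj
        simp [krAlpha, krQ, krLam, hl, krC_apply]
        field_simp
      · simp [krQ, krLam, hl, hj]
  have hd := congrArg LinearMap.det hcomp
  rw [LinearMap.det_comp, LinearMap.det_comp, mul_comm, krLam_det] at hd
  rw [mul_left_cancel₀ (krQ_det k0) hd, Fintype.prod_sum_type]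
  have e1 : ∏ i : κ, ∏ j : κ, l (Sum.inl i) j = ∏ j ∈ Finset.univ.erase k0, (1 + t / (s k0 - s j)) * (1 + t / (s k0 + s j)) := by
    simp only [hl, Sum.elim_inl, Finset.prod_mul_distrib]
    congr 1
    · simp only [Finset.prod_ite_eq', Finset.mem_univ, if_true]
      rw [← Finset.mul_prod_erase _ _ (Finset.mem_univ k0)]
      simp only [hal, if_true, one_mul]
      exact Finset.prod_congr rfl fun j hj => by simp [Finset.ne_of_mem_erase hj]
    · rw [Finset.prod_comm]
      simp only [Finset.prod_ite_eq', Finset.mem_univ, if_true]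
      rw [← Finset.mul_prod_erase _ _ (Finset.mem_univ k0)]
      simp only [hbe, if_true, one_mul]
      exact Finset.prod_congr rfl fun j hj => by simp [Finset.ne_of_mem_erase hj]
  have e2 : ∏ i : ρ, ∏ j : κ, l (Sum.inr i) j = (1 + t / s k0) ^ Fintype.card ρ := by
    simp [hl]
  rw [e1, e2]
  have e3 : (1 + t / s k0) ^ Fintype.card ρ * s k0 ^ Fintype.card ρ = (s k0 + t) ^ Fintype.card ρ := by
    rw [← mul_pow]
    congr 1
    field_simp
  have e4 : (∏ j ∈ Finset.univ.erase k0, (1 + t / (s k0 - s j)) * (1 + t / (s k0 + s j))) *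
      (∏ j ∈ Finset.univ.erase k0, (s k0 ^ 2 - s j ^ 2)) =
      ∏ j ∈ Finset.univ.erase k0, ((s k0 + t) ^ 2 - s j ^ 2) := by
    rw [← Finset.prod_mul_distrib]
    refine Finset.prod_congr rfl fun j hj => ?_
    have := p1 j (Finset.ne_of_mem_erase hj)
    have := p2 j
    rw [p3 j]
    field_simp
    ring
  rw [← e3, ← e4]
  ring
end


section
variable {m κ ρ : Type} [Fintype m] [Fintype κ] [Fintype ρ] [DecidableEq m] [DecidableEq κ] [DecidableEq ρ]

theorem KrSVD.core {Y : m → κ → ℝ} {s : κ → ℝ} {U : Matrix m (κ ⊕ ρ) ℝ} {V : Matrix κ κ ℝ}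
    (h : KrSVD Y s U V) : Uᵀ * Matrix.of Y * V = (Matrix.fromRows (Matrix.diagonal s) 0 : Matrix (κ ⊕ ρ) κ ℝ) := by
  rw [h.eq]
  calc Uᵀ * (U * (Matrix.fromRows (Matrix.diagonal s) 0 : Matrix (κ ⊕ ρ) κ ℝ) * Vᵀ) * V
      = (Uᵀ * U) * (Matrix.fromRows (Matrix.diagonal s) 0 : Matrix (κ ⊕ ρ) κ ℝ) * (Vᵀ * V) := by
        simp only [Matrix.mul_assoc]
    _ = _ := by rw [h.uu, h.vv]; simp

theorem KrSVD.right {Y : m → κ → ℝ} {s : κ → ℝ} {U : Matrix m (κ ⊕ ρ) ℝ} {V : Matrix κ κ ℝ}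
    (h : KrSVD Y s U V) (k : κ) : Matrix.of Y *ᵥ (fun l => V l k) = s k • (fun i => U i (Sum.inl k)) := by
  have h1 : Matrix.of Y * V = U * (Matrix.fromRows (Matrix.diagonal s) 0 : Matrix (κ ⊕ ρ) κ ℝ) := by
    rw [h.eq, Matrix.mul_assoc, h.vv, Matrix.mul_one]
  ext i
  have := congrFun (congrFun h1 i) k
  simp only [Matrix.mul_apply, Fintype.sum_sum_type, Matrix.fromRows_apply_inl, Matrix.fromRows_apply_inr,
    Matrix.diagonal_apply] at this
  simp [Matrix.mulVec, dotProduct] at this ⊢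
  rw [this]; ring

theorem KrSVD.left {Y : m → κ → ℝ} {s : κ → ℝ} {U : Matrix m (κ ⊕ ρ) ℝ} {V : Matrix κ κ ℝ}
    (h : KrSVD Y s U V) (k : κ) : (Matrix.of Y)ᵀ *ᵥ (fun i => U i (Sum.inl k)) = s k • (fun l => V l k) := by
  have h1 : Uᵀ * Matrix.of Y = (Matrix.fromRows (Matrix.diagonal s) 0 : Matrix (κ ⊕ ρ) κ ℝ) * Vᵀ := by
    rw [h.eq, ← Matrix.mul_assoc, ← Matrix.mul_assoc, h.uu, Matrix.one_mul]
  ext i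
  have := congrFun (congrFun h1 (Sum.inl k)) i
  simp only [Matrix.mul_apply, Matrix.fromRows_apply_inl,
    Matrix.diagonal_apply] at this
  simp [Matrix.mulVec, dotProduct] at this ⊢
  rw [← this]
  exact Finset.sum_congr rfl fun _ _ => mul_comm _ _

theorem KrSVD.uorth {Y : m → κ → ℝ} {s : κ → ℝ} {U : Matrix m (κ ⊕ ρ) ℝ} {V : Matrix κ κ ℝ}
    (h : KrSVD Y s U V) (k l : κ ⊕ ρ) : ∑ i, U i k * U i l = if k = l then 1 else 0 := by
  have := congrFun (congrFun h.uu k) l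
  simpa [Matrix.mul_apply, Matrix.one_apply] using this

theorem KrSVD.vorth {Y : m → κ → ℝ} {s : κ → ℝ} {U : Matrix m (κ ⊕ ρ) ℝ} {V : Matrix κ κ ℝ}
    (h : KrSVD Y s U V) (k l : κ) : ∑ i, V i k * V i l = if k = l then 1 else 0 := by
  have := congrFun (congrFun h.vv k) l
  simpa [Matrix.mul_apply, Matrix.one_apply] using this

/-- pairing with a rank one matrix at the singular vectors -/
theorem KrSVD.pair {Y : m → κ → ℝ} {s : κ → ℝ} {U : Matrix m (κ ⊕ ρ) ℝ} {V : Matrix κ κ ℝ}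
    (h : KrSVD Y s U V) (k : κ) : ∑ i, ∑ j, Y i j * (U i (Sum.inl k) * V j k) = s k := by
  have h1 : ∀ i, ∑ j, Y i j * (U i (Sum.inl k) * V j k) = U i (Sum.inl k) * (s k * U i (Sum.inl k)) := by
    intro i
    have := congrFun (h.right k) i
    simp [Matrix.mulVec, dotProduct] at this
    rw [← this, Finset.mul_sum]
    exact Finset.sum_congr rfl fun _ _ => by ring
  simp only [h1]
  have := h.uorth (Sum.inl k) (Sum.inl k)
  simp at this
  calc _ = s k * ∑ i, U i (Sum.inl k) * U i (Sum.inl k) := by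
        rw [Finset.mul_sum]
        exact Finset.sum_congr rfl fun _ _ => by ring
    _ = s k := by rw [this, mul_one]

theorem kr_orth_sq {a b : Type} [Fintype a] [Fintype b] [DecidableEq a] [DecidableEq b] (U : Matrix a b ℝ)
    (hU : U * Uᵀ = 1) (u : a → ℝ) : ∑ i, (Uᵀ *ᵥ u) i ^ 2 = ∑ i, u i ^ 2 := by
  have : (Uᵀ *ᵥ u) ⬝ᵥ (Uᵀ *ᵥ u) = u ⬝ᵥ u := by
    rw [Matrix.dotProduct_mulVec, Matrix.vecMul_transpose, Matrix.mulVec_mulVec, hU, Matrix.one_mulVec]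
  simpa [dotProduct, sq] using this

theorem KrSVD.pair_le {Y : m → κ → ℝ} {s : κ → ℝ} {U : Matrix m (κ ⊕ ρ) ℝ} {V : Matrix κ κ ℝ}
    (h : KrSVD Y s U V) (k0 : κ) (h0 : ∀ k, 0 ≤ s k) (hs : ∀ k, s k ≤ s k0) (u : m → ℝ) (v : κ → ℝ)
    (hu : ∑ i, u i ^ 2 = 1) (hv : ∑ j, v j ^ 2 = 1) :
    ∑ i, ∑ j, Y i j * (u i * v j) ≤ s k0 := by
  have e : ∑ i, ∑ j, Y i j * (u i * v j) = ∑ k, s k * ((Uᵀ *ᵥ u) (Sum.inl k) * (Vᵀ *ᵥ v) k) := by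
    have e1 : ∑ i, ∑ j, Y i j * (u i * v j) = u ⬝ᵥ (Matrix.of Y *ᵥ v) := by
      simp only [dotProduct, Matrix.mulVec, Finset.mul_sum, Matrix.of_apply]
      exact Finset.sum_congr rfl fun _ _ => Finset.sum_congr rfl fun _ _ => by ring
    rw [e1, h.eq, ← Matrix.mulVec_mulVec, ← Matrix.mulVec_mulVec, Matrix.dotProduct_mulVec,
      ← Matrix.mulVec_transpose]
    simp only [Matrix.fromRows_mulVec, dotProduct, Fintype.sum_sum_type, Sum.elim_inl, Sum.elim_inr,
      Matrix.mulVec_diagonal, Matrix.zero_mulVec, Pi.zero_apply, mul_zero, Finset.sum_const_zero, add_zero]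
    refine Finset.sum_congr rfl fun k _ => ?_
    ring
  rw [e]
  have ha := kr_orth_sq U h.uu' u
  have hb := kr_orth_sq V h.vv' v
  rw [hu, Fintype.sum_sum_type] at ha
  rw [hv] at hb
  have hr : 0 ≤ ∑ r, (Uᵀ *ᵥ u) (Sum.inr r) ^ 2 := Finset.sum_nonneg fun _ _ => sq_nonneg _
  have h1 : ∀ k, s k * ((Uᵀ *ᵥ u) (Sum.inl k) * (Vᵀ *ᵥ v) k) ≤
      s k0 * (((Uᵀ *ᵥ u) (Sum.inl k) ^ 2 + (Vᵀ *ᵥ v) k ^ 2) / 2) := by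
    intro k
    have := two_mul_le_add_sq ((Uᵀ *ᵥ u) (Sum.inl k)) ((Vᵀ *ᵥ v) k)
    have h3 : 0 ≤ ((Uᵀ *ᵥ u) (Sum.inl k) ^ 2 + (Vᵀ *ᵥ v) k ^ 2) / 2 := by positivity
    nlinarith [mul_le_mul_of_nonneg_left (show ((Uᵀ *ᵥ u) (Sum.inl k) * (Vᵀ *ᵥ v) k) ≤ ((Uᵀ *ᵥ u) (Sum.inl k) ^ 2 + (Vᵀ *ᵥ v) k ^ 2) / 2 by linarith) (h0 k),
      mul_le_mul_of_nonneg_right (hs k) h3]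
  calc _ ≤ ∑ k, s k0 * (((Uᵀ *ᵥ u) (Sum.inl k) ^ 2 + (Vᵀ *ᵥ v) k ^ 2) / 2) := Finset.sum_le_sum fun k _ => h1 k
    _ = s k0 * ((∑ k, (Uᵀ *ᵥ u) (Sum.inl k) ^ 2 + ∑ k, (Vᵀ *ᵥ v) k ^ 2) / 2) := by
      rw [← Finset.mul_sum, ← Finset.sum_div, Finset.sum_add_distrib]
    _ ≤ s k0 * 1 := by
      apply mul_le_mul_of_nonneg_left _ (h0 k0)
      linarith
    _ = s k0 := mul_one _

theorem kr_sq_le {a : Type} [Fintype a] {u : a → ℝ} (hu : ∑ i, u i ^ 2 = 1) (i : a) : |u i| ≤ 1 := by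
  rw [← sq_le_one_iff_abs_le_one, ← hu]
  exact Finset.single_le_sum (f := fun i => u i ^ 2) (fun _ _ => sq_nonneg _) (Finset.mem_univ i)

theorem kr_top_lip {S : (m → κ → ℝ) → κ → ℝ} {U : (m → κ → ℝ) → Matrix m (κ ⊕ ρ) ℝ} {V : (m → κ → ℝ) → Matrix κ κ ℝ}
    (h : ∀ Y, KrSVD Y (S Y) (U Y) (V Y)) (k0 : κ) (h0 : ∀ Y k, 0 ≤ S Y k) (hs : ∀ Y k, S Y k ≤ S Y k0) :
    LipschitzWith (Fintype.card m * Fintype.card κ : NNReal) (fun Y => S Y k0) := by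
  apply LipschitzWith.of_le_add_mul
  intro X Y
  have hu : ∑ i, (fun i => U X i (Sum.inl k0)) i ^ 2 = 1 := by
    simpa [sq] using (h X).uorth (Sum.inl k0) (Sum.inl k0)
  have hv : ∑ i, (fun i => V X i k0) i ^ 2 = 1 := by
    simpa [sq] using (h X).vorth k0 k0
  have h1 := (h Y).pair_le k0 (h0 Y) (hs Y) _ _ hu hv
  have h2 := (h X).pair k0
  have h3 : ∑ i, ∑ j, X i j * (U X i (Sum.inl k0) * V X j k0) ≤ 
    ∑ i, ∑ j, Y i j * (U X i (Sum.inl k0) * V X j k0) + ∑ i : m, ∑ j : κ, dist X Y := by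
    simp only [← Finset.sum_add_distrib]
    refine Finset.sum_le_sum fun i _ => Finset.sum_le_sum fun j _ => ?_
    have e1 := kr_sq_le hu i
    have e2 := kr_sq_le hv j
    have e3 : |X i j - Y i j| ≤ dist X Y := by
      rw [← Real.dist_eq]
      exact (dist_le_pi_dist (X i) (Y i) j).trans (dist_le_pi_dist X Y i)
    have e4 : (X i j - Y i j) * (U X i (Sum.inl k0) * V X j k0) ≤ dist X Y := by
      refine (le_abs_self _).trans ?_
      rw [abs_mul, abs_mul]
      calc _ ≤ dist X Y * (1 * 1) := by gcongr
        _ = _ := by ring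
    linarith
  simp at h3 h1 h2 ⊢
  linarith
end


section
variable {m κ ρ : Type} [Fintype m] [Fintype κ] [Fintype ρ] [DecidableEq m] [DecidableEq κ] [DecidableEq ρ]

/-- change of coordinates `H ↦ Uᵀ H V` -/
noncomputable def krConj (U : Matrix m (κ ⊕ ρ) ℝ) (V : Matrix κ κ ℝ) (hU : Uᵀ * U = 1) (hU' : U * Uᵀ = 1)
    (hV : Vᵀ * V = 1) (hV' : V * Vᵀ = 1) : (m → κ → ℝ) ≃ₗ[ℝ] ((κ ⊕ ρ) → κ → ℝ) where
  toFun H := Matrix.of.symm (Uᵀ * Matrix.of H * V)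
  invFun M := Matrix.of.symm (U * Matrix.of M * Vᵀ)
  map_add' H H' := by
    rw [← Matrix.of_add_of, Matrix.mul_add, Matrix.add_mul]; rfl
  map_smul' c H := by
    rw [← Matrix.smul_of, Matrix.mul_smul, Matrix.smul_mul]; rfl
  left_inv H := by
    change Matrix.of.symm (U * (Uᵀ * Matrix.of H * V) * Vᵀ) = H
    have : U * (Uᵀ * Matrix.of H * V) * Vᵀ = (U * Uᵀ) * Matrix.of H * (V * Vᵀ) := by
      simp only [Matrix.mul_assoc]
    rw [this, hU', hV']
    simp
  right_inv M := by
    change Matrix.of.symm (Uᵀ * (U * Matrix.of M * Vᵀ) * V) = M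
    have : Uᵀ * (U * Matrix.of M * Vᵀ) * V = (Uᵀ * U) * Matrix.of M * (Vᵀ * V) := by
      simp only [Matrix.mul_assoc]
    rw [this, hU, hV]
    simp

open Filter Topology in
theorem kr_K_deriv {S : (m → κ → ℝ) → κ → ℝ} {U : (m → κ → ℝ) → Matrix m (κ ⊕ ρ) ℝ} {V : (m → κ → ℝ) → Matrix κ κ ℝ}
    (h : ∀ Y, KrSVD Y (S Y) (U Y) (V Y)) (k0 : κ) (h0 : ∀ Y k, 0 ≤ S Y k) (hc : Continuous fun Y => S Y k0)
    (Y : m → κ → ℝ) (hp : 0 < S Y k0) (hs : ∀ j, j ≠ k0 → S Y j < S Y k0) :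
    ∃ e : (m → κ → ℝ) ≃L[ℝ] ((κ ⊕ ρ) → κ → ℝ), HasFDerivAt (fun X i j => U X i (Sum.inl k0) * V X j k0)
      ((e.symm : ((κ ⊕ ρ) → κ → ℝ) →L[ℝ] (m → κ → ℝ)).comp ((krD (S Y) k0).comp (e : (m → κ → ℝ) →L[ℝ] ((κ ⊕ ρ) → κ → ℝ)))) Y := by
  set e := (krConj (U Y) (V Y) (h Y).uu (h Y).uu' (h Y).vv (h Y).vv').toContinuousLinearEquiv with he
  have heap : ∀ H, Matrix.of (e H) = (U Y)ᵀ * Matrix.of H * V Y := fun H => rfl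
  refine ⟨e, ?_⟩
  set u : (m → κ → ℝ) → m → ℝ := fun X i => U X i (Sum.inl k0) with hu
  set v : (m → κ → ℝ) → κ → ℝ := fun X i => V X i k0 with hv
  set ep : (m → κ → ℝ) → ℝ := fun X => if 0 ≤ ((V Y)ᵀ *ᵥ v X) k0 then 1 else -1 with hep
  have hep2 : ∀ X, ep X * ep X = 1 := fun X => by simp only [hep]; split_ifs <;> norm_num
  set a : (m → κ → ℝ) → (κ ⊕ ρ) → ℝ := fun X => ep X • ((U Y)ᵀ *ᵥ u X) with hadef
  set b : (m → κ → ℝ) → κ → ℝ := fun X => ep X • ((V Y)ᵀ *ᵥ v X) with hbdef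
  have hYe : Matrix.of (e Y) = (Matrix.fromRows (Matrix.diagonal (S Y)) 0 : Matrix (κ ⊕ ρ) κ ℝ) := by
    rw [heap, (h Y).core]
  have hsub : ∀ X, Matrix.of (e X) = Matrix.of (e (X - Y)) + Matrix.of (e Y) := by
    intro X
    rw [map_sub]
    ext i j; simp
  have e12 : ∀ X, Matrix.of (e X) *ᵥ b X = S X k0 • a X := by
    intro X
    simp only [hbdef, hadef]
    rw [heap, Matrix.mulVec_smul, Matrix.mulVec_mulVec, Matrix.mul_assoc, (h Y).vv', Matrix.mul_one,
      ← Matrix.mulVec_mulVec, (h X).right k0, Matrix.mulVec_smul, smul_comm]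
  have e3 : ∀ X, (Matrix.of (e X))ᵀ *ᵥ a X = S X k0 • b X := by
    intro X
    simp only [hbdef, hadef]
    rw [heap, Matrix.transpose_mul, Matrix.transpose_mul, Matrix.transpose_transpose, Matrix.mulVec_smul,
      Matrix.mulVec_mulVec, Matrix.mul_assoc, Matrix.mul_assoc, (h Y).uu', Matrix.mul_one,
      ← Matrix.mulVec_mulVec, (h X).left k0, Matrix.mulVec_smul, smul_comm]
  have key := kr_deriv_ab (e : (m → κ → ℝ) →L[ℝ] ((κ ⊕ ρ) → κ → ℝ)) (S Y) k0 hp (h0 Y) hs Y a b (fun X => S X k0)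
    ?_ ?_ ?_ ?_ ?_ ?_ hc.continuousAt
  · have hK : (fun X i j => U X i (Sum.inl k0) * V X j k0) = fun X => e.symm (fun i j => a X i * b X j) := by
      funext X
      rw [eq_comm, ContinuousLinearEquiv.symm_apply_eq]
      apply Matrix.of.injective
      rw [heap]
      have : (Matrix.of fun i j => U X i (Sum.inl k0) * V X j k0) = Matrix.vecMulVec (u X) (v X) := by
        ext i j; simp [Matrix.vecMulVec_apply, hu, hv]
      rw [this, Matrix.mul_vecMulVec, Matrix.vecMulVec_mul]
      ext i j
      simp only [Matrix.vecMulVec_apply, hadef, hbdef, Matrix.of_apply, Pi.smul_apply, smul_eq_mul]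
      rw [← Matrix.mulVec_transpose]
      linear_combination ((U Y)ᵀ *ᵥ u X) i * ((V Y)ᵀ *ᵥ v X) j * hep2 X
    rw [hK]
    exact e.symm.hasFDerivAt.comp Y key
  · intro X j
    have := congrFun (e12 X) (Sum.inl j)
    rw [hsub X, hYe, Matrix.add_mulVec] at this
    simp only [Pi.add_apply, Matrix.fromRows_mulVec, Sum.elim_inl, Pi.smul_apply, smul_eq_mul] at this
    rw [Matrix.mulVec_diagonal] at this
    exact this
  · intro X j
    have := congrFun (e12 X) (Sum.inr j)
    rw [hsub X, hYe, Matrix.add_mulVec] at this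
    simp only [Pi.add_apply, Matrix.fromRows_mulVec, Sum.elim_inr, Pi.smul_apply, smul_eq_mul, Matrix.zero_mulVec, Pi.zero_apply, add_zero] at this
    exact this
  · intro X j
    have := congrFun (e3 X) j
    rw [hsub X, hYe, Matrix.transpose_add, Matrix.add_mulVec] at this
    have h2 : ((Matrix.fromRows (Matrix.diagonal (S Y)) 0 : Matrix (κ ⊕ ρ) κ ℝ)ᵀ *ᵥ a X) j = S Y j * a X (Sum.inl j) := by
      simp [Matrix.mulVec, dotProduct, Matrix.transpose_apply, Matrix.diagonal_apply]
    rw [Pi.add_apply, h2] at this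
    exact this
  · intro X
    have h1 : ∑ i, u X i ^ 2 = 1 := by
      simpa [sq] using (h X).uorth (Sum.inl k0) (Sum.inl k0)
    rw [← h1, ← kr_orth_sq (U Y) (h Y).uu' (u X)]
    refine Finset.sum_congr rfl fun i _ => ?_
    simp only [hadef, Pi.smul_apply, smul_eq_mul]
    linear_combination ((U Y)ᵀ *ᵥ u X) i ^ 2 * hep2 X
  · intro X
    have h1 : ∑ i, v X i ^ 2 = 1 := by
      simpa [sq] using (h X).vorth k0 k0
    rw [← h1, ← kr_orth_sq (V Y) (h Y).vv' (v X)]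
    refine Finset.sum_congr rfl fun i _ => ?_
    simp only [hbdef, Pi.smul_apply, smul_eq_mul]
    linear_combination ((V Y)ᵀ *ᵥ v X) i ^ 2 * hep2 X
  · intro X
    simp only [hbdef, hep, Pi.smul_apply, smul_eq_mul]
    split_ifs with hh
    · simpa using hh
    · push Not at hh
      linarith

/-- uniqueness of the top rank one part -/
theorem kr_K_unique {Y : m → κ → ℝ} {s : κ → ℝ} {U U' : Matrix m (κ ⊕ ρ) ℝ} {V V' : Matrix κ κ ℝ}
    (h : KrSVD Y s U V) (h' : KrSVD Y s U' V') (k0 : κ) (hp : 0 < s k0) (h0 : ∀ j, 0 ≤ s j) (hs : ∀ j, j ≠ k0 → s j < s k0) (i : m) (j : κ) :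
    U i (Sum.inl k0) * V j k0 = U' i (Sum.inl k0) * V' j k0 := by
  set v' : κ → ℝ := fun l => V' l k0 with hv'
  set b := Vᵀ *ᵥ v' with hb
  have hvb : v' = V *ᵥ b := by rw [hb, Matrix.mulVec_mulVec, h.vv', Matrix.one_mulVec]
  have g' : ((Matrix.of Y)ᵀ * Matrix.of Y) *ᵥ v' = (s k0 ^ 2) • v' := by
    rw [← Matrix.mulVec_mulVec, h'.right, Matrix.mulVec_smul, h'.left, smul_smul, sq]
  have g : ∀ k, ((Matrix.of Y)ᵀ * Matrix.of Y) *ᵥ (fun l => V l k) = (s k ^ 2) • (fun l => V l k) := by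
    intro k
    rw [← Matrix.mulVec_mulVec, h.right, Matrix.mulVec_smul, h.left, smul_smul, sq]
  have hbk : ∀ k, b k = (fun l => V l k) ⬝ᵥ v' := fun k => by
    simp [hb, Matrix.mulVec, dotProduct]
  have hb0 : ∀ k, k ≠ k0 → b k = 0 := by
    intro k hk
    have h1 : (fun l => V l k) ⬝ᵥ (((Matrix.of Y)ᵀ * Matrix.of Y) *ᵥ v') = (((Matrix.of Y)ᵀ * Matrix.of Y) *ᵥ (fun l => V l k)) ⬝ᵥ v' := by
      rw [Matrix.dotProduct_mulVec, ← Matrix.mulVec_transpose, Matrix.transpose_mul, Matrix.transpose_transpose]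
    rw [g', g, dotProduct_smul, smul_dotProduct, ← hbk] at h1
    simp only [smul_eq_mul] at h1
    have h2 : s k ^ 2 < s k0 ^ 2 := pow_lt_pow_left₀ (hs k hk) (h0 k) two_ne_zero
    have h3 : (s k0 ^ 2 - s k ^ 2) * b k = 0 := by linarith
    rcases mul_eq_zero.1 h3 with h4 | h4
    · linarith
    · exact h4
  have hv2 : v' = b k0 • fun l => V l k0 := by
    rw [hvb]
    ext l
    simp only [Matrix.mulVec, dotProduct, Pi.smul_apply, smul_eq_mul]
    rw [Finset.sum_eq_single k0]
    · simp [hb]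
      exact mul_comm _ _
    · intro k _ hk; rw [hb0 k hk, mul_zero]
    · simp
  have hn : b k0 ^ 2 = 1 := by
    have h1 : ∑ i, v' i ^ 2 = 1 := by
      simpa [sq] using h'.vorth k0 k0
    have h2 : ∑ i, V i k0 ^ 2 = 1 := by
      simpa [sq] using h.vorth k0 k0
    rw [hv2] at h1
    simp only [Pi.smul_apply, smul_eq_mul, mul_pow, ← Finset.mul_sum, h2, mul_one] at h1
    exact h1
  have hu2 : (fun i => U' i (Sum.inl k0)) = b k0 • fun i => U i (Sum.inl k0) := by
    have h1 := h'.right k0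
    rw [← hv', hv2, Matrix.mulVec_smul, h.right, smul_comm] at h1
    have := smul_right_injective (m → ℝ) hp.ne' h1
    exact this.symm
  have e1 := congrFun hu2 i
  have e2 := congrFun hv2 j
  simp only [hv', Pi.smul_apply, smul_eq_mul] at e1 e2
  rw [e1, e2]
  linear_combination (-U i (Sum.inl k0) * V j k0) * hn

/-- adding `t` times the top rank one part -/
theorem kr_flow {Y : m → κ → ℝ} {s : κ → ℝ} {U : Matrix m (κ ⊕ ρ) ℝ} {V : Matrix κ κ ℝ}
    (h : KrSVD Y s U V) (k0 : κ) (t : ℝ) :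
    KrSVD (fun i j => Y i j + t * (U i (Sum.inl k0) * V j k0)) (Function.update s k0 (s k0 + t)) U V := by
  refine ⟨h.uu, h.uu', h.vv, h.vv', ?_⟩
  have h1 : (Matrix.fromRows (Matrix.diagonal (Function.update s k0 (s k0 + t))) 0 : Matrix (κ ⊕ ρ) κ ℝ) =
      Matrix.fromRows (Matrix.diagonal s) 0 + t • Matrix.single (Sum.inl k0) k0 1 := by
    ext (i | i) j
    · by_cases hij : i = j
      · subst hij
        by_cases hi : i = k0
        · subst hi; simp
        · simp [hi, Ne.symm hi]
      · simp [hij]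
        simp [Matrix.single_apply]
        rintro rfl
        exact fun hh => absurd hh hij
    · simp
  rw [h1, Matrix.mul_add, Matrix.add_mul, ← h.eq]
  ext i j
  simp only [Matrix.of_apply, Matrix.add_apply, Matrix.mul_apply, Matrix.smul_apply, Matrix.single_apply,
    smul_eq_mul, mul_ite, mul_one, mul_zero, Matrix.transpose_apply]
  congr 1
  rw [Finset.sum_eq_single k0]
  · simp
    ring
  · intro k _ hk
    simp [Ne.symm hk]
  · simp
end


structure KrSys (N p : ℕ) where
  S : (Fin N → Fin p → ℝ) → Fin p → ℝ
  U : (Fin N → Fin p → ℝ) → Matrix (Fin N) (Fin p ⊕ Fin (N - p)) ℝ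
  V : (Fin N → Fin p → ℝ) → Matrix (Fin p) (Fin p) ℝ
  anti : ∀ Y, Antitone (S Y)
  nn : ∀ Y i, 0 ≤ S Y i
  svd : ∀ Y, KrSVD Y (S Y) (U Y) (V Y)

theorem kr_sys_exists {N p : ℕ} (hNp : p ≤ N) : Nonempty (KrSys N p) := by
  choose S U V h1 h2 h3 using fun Y => kr_svd_exists hNp Y
  exact ⟨⟨S, U, V, h1, h2, h3⟩⟩

def krDom {p : ℕ} (k0 : Fin p) (s : Fin p → ℝ) : Set ℝ := {z | 0 < z ∧ ∀ j, j ≠ k0 → s j < z}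

theorem KrSys.sv {N p : ℕ} (Q : KrSys N p) (Y) : KrSV Y (Q.S Y) := kr_svd_gram (Q.anti Y) (Q.nn Y) (Q.svd Y)

theorem kr_graph_closed (N p : ℕ) : IsClosed {q : (Fin N → Fin p → ℝ) × (Fin p → ℝ) | KrSV q.1 q.2} := by
  have : {q : (Fin N → Fin p → ℝ) × (Fin p → ℝ) | KrSV q.1 q.2} =
    (⋂ i : Fin p, ⋂ j : Fin p, ⋂ _ : i ≤ j, {q | q.2 j ≤ q.2 i}) ∩ (⋂ i : Fin p, {q | 0 ≤ q.2 i}) ∩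
    (⋂ z : ℝ, {q | (z • (1 : Matrix (Fin p) (Fin p) ℝ) - (Matrix.of q.1)ᵀ * Matrix.of q.1).det = ∏ i, (z - q.2 i ^ 2)}) := by
    ext q
    simp only [Set.mem_ofPred_eq, Set.mem_inter_iff, Set.mem_iInter]
    exact ⟨fun h => ⟨⟨fun i j hij => h.anti hij, h.nonneg⟩, h.det⟩, fun h => ⟨fun i j hij => h.1.1 i j hij, h.1.2, h.2⟩⟩
  rw [this]
  refine IsClosed.inter (IsClosed.inter ?_ ?_) ?_
  · refine isClosed_iInter fun i => isClosed_iInter fun j => isClosed_iInter fun _ => isClosed_le (by fun_prop) (by fun_prop)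
  · exact isClosed_iInter fun i => isClosed_le (by fun_prop) (by fun_prop)
  · refine isClosed_iInter fun z => isClosed_eq ?_ (by fun_prop)
    have h1 : Continuous fun q : (Fin N → Fin p → ℝ) × (Fin p → ℝ) => (Matrix.of q.1 : Matrix (Fin N) (Fin p) ℝ) := continuous_fst
    exact (continuous_const.sub (h1.matrix_transpose.matrix_mul h1)).matrix_det

theorem KrSys.meas {N p : ℕ} (Q : KrSys N p) : Measurable Q.S := by
  intro B hB
  have : Q.S ⁻¹' B = Prod.fst '' ({q : (Fin N → Fin p → ℝ) × (Fin p → ℝ) | KrSV q.1 q.2} ∩ Prod.snd ⁻¹' B) := by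
    ext Y
    constructor
    · intro h
      exact ⟨(Y, Q.S Y), ⟨Q.sv Y, h⟩, rfl⟩
    · rintro ⟨⟨Y', s⟩, ⟨h1, h2⟩, rfl⟩
      have : Q.S Y' = s := kr_sv_unique (Q.sv Y') h1
      simpa [this] using h2
  rw [this]
  refine MeasurableSet.image_of_measurable_injOn ((kr_graph_closed N p).measurableSet.inter (measurable_snd hB)) measurable_fst ?_
  rintro ⟨Y, s⟩ ⟨h1, _⟩ ⟨Y', s'⟩ ⟨h1', _⟩ (rfl : Y = Y')
  exact Prod.ext rfl (kr_sv_unique (h1 : KrSV Y s) h1')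

theorem KrSys.lip {N p : ℕ} (Q : KrSys N p) (k0 : Fin p) (hk : ∀ k, k0 ≤ k) :
    LipschitzWith (Fintype.card (Fin N) * Fintype.card (Fin p) : NNReal) (fun Y => Q.S Y k0) :=
  kr_top_lip Q.svd k0 Q.nn (fun Y k => Q.anti Y (hk k))

theorem KrSys.grad {N p : ℕ} (Q : KrSys N p) (k0 : Fin p) (hk : ∀ k, k0 ≤ k) (Y : Fin N → Fin p → ℝ) 
    (f' : (Fin N → Fin p → ℝ) →L[ℝ] ℝ) (hf : HasFDerivAt (fun Y => Q.S Y k0) f' Y) (u : Fin N → ℝ) (v : Fin p → ℝ)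
    (hu : ∑ i, u i ^ 2 = 1) (hv : ∑ j, v j ^ 2 = 1) (heq : ∑ i, ∑ j, Y i j * (u i * v j) = Q.S Y k0)
    (H : Fin N → Fin p → ℝ) : f' H = ∑ i, ∑ j, H i j * (u i * v j) := by
  set g : (Fin N → Fin p → ℝ) →ₗ[ℝ] ℝ := 
    { toFun := fun H => ∑ i, ∑ j, H i j * (u i * v j)
      map_add' := fun a b => by simp only [Pi.add_apply, add_mul, Finset.sum_add_distrib]
      map_smul' := fun a b => by simp only [Pi.smul_apply, smul_eq_mul, Finset.mul_sum, mul_assoc, RingHom.id_apply] } with hg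
  have hmin : IsLocalMin (fun X => Q.S X k0 - g.toContinuousLinearMap X) Y := by
    refine Filter.Eventually.of_forall fun X => ?_
    have h1 := (Q.svd X).pair_le k0 (Q.nn X) (fun k => Q.anti X (hk k)) u v hu hv
    change Q.S Y k0 - (∑ i, ∑ j, Y i j * (u i * v j)) ≤ Q.S X k0 - (∑ i, ∑ j, X i j * (u i * v j))
    linarith
  have := hmin.hasFDerivAt_eq_zero (hf.sub g.toContinuousLinearMap.hasFDerivAt)
  have h2 := congrArg (fun F => F H) this
  simp only [_root_.sub_apply, _root_.zero_apply, sub_eq_zero] at h2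
  exact h2

theorem KrSys.ae {N p : ℕ} (Q : KrSys N p) (k0 : Fin p) (hk : ∀ k, k0 ≤ k) :
    ∀ᵐ Y : Fin N → Fin p → ℝ, Q.S Y k0 ∈ krDom k0 (Q.S Y) := by
  filter_upwards [(Q.lip k0 hk).ae_differentiableAt] with Y hY
  have hf := hY.hasFDerivAt
  have hu : ∀ k, ∑ i, Q.U Y i (Sum.inl k) ^ 2 = 1 := fun k => by
    simpa [sq] using (Q.svd Y).uorth (Sum.inl k) (Sum.inl k)
  have hv : ∀ k, ∑ i, Q.V Y i k ^ 2 = 1 := fun k => by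
    simpa [sq] using (Q.svd Y).vorth k k
  have fac : ∀ (a c : Fin N → ℝ) (b d : Fin p → ℝ), ∑ i, ∑ j, (a i * b j) * (c i * d j) = (∑ i, a i * c i) * ∑ j, b j * d j := by
    intro a c b d
    rw [Finset.sum_mul_sum]
    exact Finset.sum_congr rfl fun _ _ => Finset.sum_congr rfl fun _ _ => by ring
  have g0 := Q.grad k0 hk Y _ hf _ _ (hu k0) (hv k0) ((Q.svd Y).pair k0) (fun i j => Q.U Y i (Sum.inl k0) * Q.V Y j k0)
  rw [fac, (Q.svd Y).uorth, (Q.svd Y).vorth] at g0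
  simp only [if_true, mul_one] at g0
  constructor
  · rcases (Q.nn Y k0).lt_or_eq with h | h
    · exact h
    · exfalso
      have g1 := Q.grad k0 hk Y _ hf (fun i => - Q.U Y i (Sum.inl k0)) _ (by simpa using hu k0) (hv k0)
        (by
          have := (Q.svd Y).pair k0
          simp only [neg_mul, mul_neg, Finset.sum_neg_distrib]
          linarith) (fun i j => Q.U Y i (Sum.inl k0) * Q.V Y j k0)
      rw [fac] at g1
      simp only [mul_neg, Finset.sum_neg_distrib] at g1
      rw [(Q.svd Y).uorth, (Q.svd Y).vorth] at g1
      simp only [if_true, mul_one] at g1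
      linarith
  · intro j hj
    rcases (Q.anti Y (hk j)).lt_or_eq with h | h
    · exact h
    · exfalso
      have g1 := Q.grad k0 hk Y _ hf _ _ (hu j) (hv j) (((Q.svd Y).pair j).trans h) (fun i j => Q.U Y i (Sum.inl k0) * Q.V Y j k0)
      rw [fac, (Q.svd Y).uorth, (Q.svd Y).vorth] at g1
      simp [Ne.symm hj] at g1
      linarith

theorem KrSys.frob {N p : ℕ} (Q : KrSys N p) (Y : Fin N → Fin p → ℝ) : ∑ i, ∑ j, Y i j ^ 2 = ∑ k, Q.S Y k ^ 2 := by
  have h1 : ∑ i, ∑ j, Y i j ^ 2 = ((Matrix.of Y)ᵀ * Matrix.of Y).trace := by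
    simp only [Matrix.trace, Matrix.diag, Matrix.mul_apply, Matrix.transpose_apply, Matrix.of_apply, sq]
    exact Finset.sum_comm
  have h := Q.svd Y
  have h2 : (Matrix.of Y)ᵀ * Matrix.of Y = Q.V Y * Matrix.diagonal (fun k => Q.S Y k ^ 2) * (Q.V Y)ᵀ := by
    have e : (Matrix.fromRows (Matrix.diagonal (Q.S Y)) 0 : Matrix (Fin p ⊕ Fin (N - p)) (Fin p) ℝ)ᵀ *
       (Matrix.fromRows (Matrix.diagonal (Q.S Y)) 0 : Matrix (Fin p ⊕ Fin (N - p)) (Fin p) ℝ) = Matrix.diagonal (fun k => Q.S Y k ^ 2) := by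
      rw [Matrix.transpose_fromRows, Matrix.fromCols_mul_fromRows]
      simp [sq]
    rw [h.eq, Matrix.transpose_mul, Matrix.transpose_mul, Matrix.transpose_transpose, ← e]
    simp only [Matrix.mul_assoc]
    rw [← Matrix.mul_assoc (Q.U Y)ᵀ, h.uu, Matrix.one_mul]
  rw [h1, h2, Matrix.trace_mul_comm, ← Matrix.mul_assoc, h.vv, Matrix.one_mul, Matrix.trace_diagonal]


theorem kr_update_anti {p : ℕ} (k0 : Fin p) (hk : ∀ k, k0 ≤ k) (s : Fin p → ℝ) (hs : Antitone s) (z : ℝ)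
    (hz : ∀ j, j ≠ k0 → s j ≤ z) : Antitone (Function.update s k0 z) := by
  intro i j hij
  by_cases hj : j = k0
  · have hi : i = k0 := le_antisymm (hij.trans hj.le) (hk i)
    rw [hi, hj]
  · by_cases hi : i = k0
    · simp [hi, hj, hz j hj]
    · simp [hi, hj, hs hij]

theorem krDom_update {p : ℕ} (k0 : Fin p) (s : Fin p → ℝ) (z : ℝ) : krDom k0 (Function.update s k0 z) = krDom k0 s := by
  ext w
  simp only [krDom, Set.mem_ofPred_eq]
  refine and_congr Iff.rfl (forall_congr' fun j => ?_)
  constructor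
  · intro h hj; simpa [hj] using h hj
  · intro h hj; simpa [hj] using h hj

noncomputable def krJ (n : ℕ) {p : ℕ} (k0 : Fin p) (s : Fin p → ℝ) : ℝ :=
  s k0 ^ n * ∏ j ∈ Finset.univ.erase k0, (s k0 ^ 2 - s j ^ 2)

theorem krJ_pos (n : ℕ) {p : ℕ} (k0 : Fin p) (s : Fin p → ℝ) (h0 : ∀ j, 0 ≤ s j) (h : s k0 ∈ krDom k0 s) : 0 < krJ n k0 s := by
  unfold krJ
  refine mul_pos (pow_pos h.1 _) (Finset.prod_pos fun j hj => ?_)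
  have := h.2 j (Finset.ne_of_mem_erase hj)
  have := pow_lt_pow_left₀ this (h0 j) two_ne_zero
  linarith

/-- the translation along the top rank one part -/
noncomputable def KrSys.T {N p : ℕ} (Q : KrSys N p) (k0 : Fin p) (t : ℝ) (Y : Fin N → Fin p → ℝ) : Fin N → Fin p → ℝ :=
  fun i j => Y i j + t * (Q.U Y i (Sum.inl k0) * Q.V Y j k0)

def KrSys.A {N p : ℕ} (Q : KrSys N p) (k0 : Fin p) : Set (Fin N → Fin p → ℝ) := {Y | Q.S Y k0 ∈ krDom k0 (Q.S Y)}

theorem KrSys.flowS {N p : ℕ} (Q : KrSys N p) (k0 : Fin p) (hk : ∀ k, k0 ≤ k) (t : ℝ) (Y : Fin N → Fin p → ℝ)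
    (ht : Q.S Y k0 + t ∈ krDom k0 (Q.S Y)) :
    Q.S (Q.T k0 t Y) = Function.update (Q.S Y) k0 (Q.S Y k0 + t) := by
  refine kr_sv_unique (Q.sv _) (kr_svd_gram ?_ ?_ (kr_flow (Q.svd Y) k0 t))
  · exact kr_update_anti k0 hk _ (Q.anti Y) _ fun j hj => (ht.2 j hj).le
  · intro i
    by_cases hi : i = k0
    · subst hi; simpa using ht.1.le
    · simpa [hi] using Q.nn Y i

theorem KrSys.flowA {N p : ℕ} (Q : KrSys N p) (k0 : Fin p) (hk : ∀ k, k0 ≤ k) (t : ℝ) (Y : Fin N → Fin p → ℝ)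
    (ht : Q.S Y k0 + t ∈ krDom k0 (Q.S Y)) : Q.T k0 t Y ∈ Q.A k0 := by
  change Q.S (Q.T k0 t Y) k0 ∈ krDom k0 (Q.S (Q.T k0 t Y))
  rw [Q.flowS k0 hk t Y ht, krDom_update]
  simpa using ht

theorem KrSys.flowK {N p : ℕ} (Q : KrSys N p) (k0 : Fin p) (hk : ∀ k, k0 ≤ k) (t : ℝ) (Y : Fin N → Fin p → ℝ)
    (ht : Q.S Y k0 + t ∈ krDom k0 (Q.S Y)) (i j) :
    Q.U (Q.T k0 t Y) i (Sum.inl k0) * Q.V (Q.T k0 t Y) j k0 = Q.U Y i (Sum.inl k0) * Q.V Y j k0 := by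
  have h1 := Q.svd (Q.T k0 t Y)
  have h2 := kr_flow (Q.svd Y) k0 t
  rw [← Q.flowS k0 hk t Y ht] at h2
  have h3 := Q.flowA k0 hk t Y ht
  exact kr_K_unique h1 h2 k0 h3.1 (Q.nn _) h3.2 i j

theorem KrSys.flowT {N p : ℕ} (Q : KrSys N p) (k0 : Fin p) (hk : ∀ k, k0 ≤ k) (t : ℝ) (Y : Fin N → Fin p → ℝ)
    (ht : Q.S Y k0 + t ∈ krDom k0 (Q.S Y)) : Q.T k0 (-t) (Q.T k0 t Y) = Y := by
  funext i j
  have := Q.flowK k0 hk t Y ht i j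
  change Q.T k0 t Y i j + (-t) * _ = _
  rw [this]
  simp [KrSys.T]

theorem krDom_add {p : ℕ} {k0 : Fin p} {s : Fin p → ℝ} {z t : ℝ} (h : z ∈ krDom k0 s) (ht : 0 ≤ t) : z + t ∈ krDom k0 s :=
  ⟨by linarith [h.1], fun j hj => by linarith [h.2 j hj]⟩

theorem KrSys.flow_inj {N p : ℕ} (Q : KrSys N p) (k0 : Fin p) (hk : ∀ k, k0 ≤ k) (t : ℝ) (ht : 0 ≤ t) :
    Set.InjOn (Q.T k0 t) (Q.A k0) := by
  intro X hX Y hY h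
  rw [← Q.flowT k0 hk t X (krDom_add hX ht), h, Q.flowT k0 hk t Y (krDom_add hY ht)]

theorem KrSys.flow_image {N p : ℕ} (Q : KrSys N p) (k0 : Fin p) (hk : ∀ k, k0 ≤ k) (t : ℝ) (ht : 0 ≤ t) :
    Q.T k0 t '' (Q.A k0) = {Z | Q.S Z k0 - t ∈ krDom k0 (Q.S Z)} := by
  ext Z
  constructor
  · rintro ⟨Y, hY, rfl⟩
    change Q.S (Q.T k0 t Y) k0 - t ∈ krDom k0 (Q.S (Q.T k0 t Y))
    rw [Q.flowS k0 hk t Y (krDom_add hY ht), krDom_update]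
    simpa using (show Q.S Y k0 ∈ krDom k0 (Q.S Y) from hY)
  · intro hZ
    have hZ' : Q.S Z k0 + (-t) ∈ krDom k0 (Q.S Z) := by rw [← sub_eq_add_neg]; exact hZ
    refine ⟨Q.T k0 (-t) Z, Q.flowA k0 hk (-t) Z hZ', ?_⟩
    have := Q.flowT k0 hk (-t) Z hZ'
    rwa [neg_neg] at this

theorem KrSys.flow_det {N p : ℕ} (Q : KrSys N p) (k0 : Fin p) (hk : ∀ k, k0 ≤ k) (t : ℝ) (Y : Fin N → Fin p → ℝ) (hY : Y ∈ Q.A k0) :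
    DifferentiableAt ℝ (Q.T k0 t) Y ∧
    (fderiv ℝ (Q.T k0 t) Y).det * krJ (N - p) k0 (Q.S Y) = krJ (N - p) k0 (Function.update (Q.S Y) k0 (Q.S Y k0 + t)) := by
  obtain ⟨e, he⟩ := kr_K_deriv Q.svd k0 Q.nn (Q.lip k0 hk).continuous Y hY.1 hY.2
  have hT := (hasFDerivAt_id Y).add (he.const_smul t)
  replace hT : HasFDerivAt (Q.T k0 t) _ Y := hT
  refine ⟨hT.differentiableAt, ?_⟩
  rw [hT.fderiv]
  have hd := kr_det (ρ := Fin (N - p)) (Q.S Y) k0 hY.1 (Q.nn Y) hY.2 t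
  have : (ContinuousLinearMap.id ℝ _ + t • ((e.symm : ((Fin p ⊕ Fin (N - p)) → Fin p → ℝ) →L[ℝ] (Fin N → Fin p → ℝ)).comp ((krD (Q.S Y) k0).comp (e : (Fin N → Fin p → ℝ) →L[ℝ] ((Fin p ⊕ Fin (N - p)) → Fin p → ℝ))))).det = 
     LinearMap.det (LinearMap.id + t • (krD (ρ := Fin (N - p)) (Q.S Y) k0 : ((Fin p ⊕ Fin (N - p)) → Fin p → ℝ) →ₗ[ℝ] ((Fin p ⊕ Fin (N - p)) → Fin p → ℝ))) := by
    rw [← LinearMap.det_conj _ e.symm.toLinearEquiv]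
    unfold ContinuousLinearMap.det
    congr 1
    apply LinearMap.ext
    intro x
    simp
  rw [this]
  simp only [Fintype.card_fin] at hd
  unfold krJ
  rw [hd]
  simp only [Function.update_self]
  congr 1
  refine Finset.prod_congr rfl fun j hj => ?_
  simp [Finset.ne_of_mem_erase hj]

theorem krDom_meas {p : ℕ} (k0 : Fin p) : MeasurableSet {q : ℝ × (Fin p → ℝ) | q.1 ∈ krDom k0 q.2} := by
  have : {q : ℝ × (Fin p → ℝ) | q.1 ∈ krDom k0 q.2} = {q | 0 < q.1} ∩ ⋂ j, ⋂ _ : j ≠ k0, {q | q.2 j < q.1} := by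
    ext q; simp [krDom]
  rw [this]
  refine (measurableSet_lt (by fun_prop) (by fun_prop)).inter ?_
  exact MeasurableSet.iInter fun j => MeasurableSet.iInter fun _ => measurableSet_lt (by fun_prop) (by fun_prop)

theorem KrSys.A_meas {N p : ℕ} (Q : KrSys N p) (k0 : Fin p) : MeasurableSet (Q.A k0) := by
  have hS := Q.meas
  have : Measurable fun Y => (Q.S Y k0, Q.S Y) := by fun_prop
  exact this (krDom_meas k0)

theorem KrSys.transport {N p : ℕ} (Q : KrSys N p) (k0 : Fin p) (hk : ∀ k, k0 ≤ k) (t : ℝ) (ht : 0 ≤ t) 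
    (f : (Fin p → ℝ) → ENNReal) :
    ∫⁻ Y in Q.A k0, f (Function.update (Q.S Y) k0 (Q.S Y k0 + t)) * ENNReal.ofReal (krJ (N - p) k0 (Q.S Y))⁻¹ =
    ∫⁻ Y in {Z | Q.S Z k0 - t ∈ krDom k0 (Q.S Z)}, f (Q.S Y) * ENNReal.ofReal (krJ (N - p) k0 (Q.S Y))⁻¹ := by
  rw [← Q.flow_image k0 hk t ht, lintegral_image_eq_lintegral_abs_det_fderiv_mul volume (Q.A_meas k0)
    (fun Y hY => (Q.flow_det k0 hk t Y hY).1.hasFDerivAt.hasFDerivWithinAt) (Q.flow_inj k0 hk t ht)]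
  refine setLIntegral_congr_fun (Q.A_meas k0) fun Y hY => ?_
  have hd := (Q.flow_det k0 hk t Y hY).2
  have hS := Q.flowS k0 hk t Y (krDom_add hY ht)
  have p1 := krJ_pos (N - p) k0 (Q.S Y) (Q.nn Y) hY
  have p2 := krJ_pos (N - p) k0 _ (Q.nn _) (Q.flowA k0 hk t Y (krDom_add hY ht))
  rw [hS] at p2
  simp only [hS]
  have h3 : (fderiv ℝ (Q.T k0 t) Y).det = krJ (N - p) k0 (Function.update (Q.S Y) k0 (Q.S Y k0 + t)) / krJ (N - p) k0 (Q.S Y) := by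
    rw [← hd]; field_simp
  rw [h3, abs_of_pos (div_pos p2 p1), mul_left_comm, ← ENNReal.ofReal_mul (div_pos p2 p1).le]
  congr 2
  field_simp


theorem kr_update_meas {p : ℕ} (k0 : Fin p) : Measurable fun q : ℝ × (Fin p → ℝ) => Function.update q.2 k0 q.1 := by
  rw [measurable_pi_iff]
  intro j
  by_cases hj : j = k0
  · subst hj; simpa using measurable_fst
  · simp only [Function.update_of_ne hj]; fun_prop

def krSw {p : ℕ} (k0 : Fin p) (q : ℝ × (Fin p → ℝ)) : ℝ × (Fin p → ℝ) := (q.2 k0, Function.update q.2 k0 q.1)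

theorem krSw_meas {p : ℕ} (k0 : Fin p) : Measurable (krSw k0) :=
  (by fun_prop : Measurable fun q : ℝ × (Fin p → ℝ) => q.2 k0).prodMk (kr_update_meas k0)

theorem krSw_krSw {p : ℕ} (k0 : Fin p) (q) : krSw k0 (krSw k0 q) = q := by
  simp [krSw]

def krGt {p : ℕ} (k0 : Fin p) : Set (ℝ × (Fin p → ℝ)) := {q | q.2 k0 < q.1 ∧ q.1 ∈ krDom k0 q.2}
def krLt {p : ℕ} (k0 : Fin p) : Set (ℝ × (Fin p → ℝ)) := {q | q.1 < q.2 k0 ∧ q.1 ∈ krDom k0 q.2}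
theorem krGt_meas {p : ℕ} (k0 : Fin p) : MeasurableSet (krGt k0) :=
  (measurableSet_lt (by fun_prop) (by fun_prop) : MeasurableSet {q : ℝ × (Fin p → ℝ) | q.2 k0 < q.1}).inter (krDom_meas k0)
theorem krLt_meas {p : ℕ} (k0 : Fin p) : MeasurableSet (krLt k0) :=
  (measurableSet_lt (by fun_prop) (by fun_prop) : MeasurableSet {q : ℝ × (Fin p → ℝ) | q.1 < q.2 k0}).inter (krDom_meas k0)

theorem kr_sym_half {p : ℕ} (k0 : Fin p) (ν : Measure (Fin p → ℝ)) [SFinite ν]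
    (hD : ∀ᵐ s ∂ν, s k0 ∈ krDom k0 s)
    (hT : ∀ t : ℝ, 0 ≤ t → ∀ f : (Fin p → ℝ) → ENNReal, Measurable f → ∫⁻ s, f (Function.update s k0 (s k0 + t)) ∂ν =
      ∫⁻ s in {s | s k0 - t ∈ krDom k0 s}, f s ∂ν)
    (h : ℝ × (Fin p → ℝ) → ENNReal) (hh : Measurable h) :
    ∫⁻ s, (∫⁻ z, (krGt k0).indicator h (z, s)) ∂ν = ∫⁻ s, (∫⁻ z, (krLt k0).indicator (fun q => h (krSw k0 q)) (z, s)) ∂ν := by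
  have m1 : Measurable ((krGt k0).indicator h) := hh.indicator (krGt_meas k0)
  have m2 : Measurable ((krLt k0).indicator (fun q => h (krSw k0 q))) := (hh.comp (krSw_meas k0)).indicator (krLt_meas k0)
  have l : ∫⁻ s, (∫⁻ z, (krGt k0).indicator h (z, s)) ∂ν = ∫⁻ t : ℝ, ∫⁻ s, (krGt k0).indicator h (s k0 + t, s) ∂ν := by
    rw [lintegral_lintegral_swap (μ := (volume : Measure ℝ)) (f := fun t s => (krGt k0).indicator h (s k0 + t, s))]
    · refine lintegral_congr fun s => ?_
      exact (lintegral_add_left_eq_self (fun z => (krGt k0).indicator h (z, s)) (s k0)).symm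
    · exact (m1.comp (by fun_prop : Measurable fun q : ℝ × (Fin p → ℝ) => (q.2 k0 + q.1, q.2))).aemeasurable
  have r : ∫⁻ s, (∫⁻ z, (krLt k0).indicator (fun q => h (krSw k0 q)) (z, s)) ∂ν =
      ∫⁻ t : ℝ, ∫⁻ s, (krLt k0).indicator (fun q => h (krSw k0 q)) (s k0 - t, s) ∂ν := by
    rw [lintegral_lintegral_swap (μ := (volume : Measure ℝ)) (f := fun t s => (krLt k0).indicator (fun q => h (krSw k0 q)) (s k0 - t, s))]
    · refine lintegral_congr fun s => ?_
      exact (lintegral_sub_left_eq_self (fun z => (krLt k0).indicator (fun q => h (krSw k0 q)) (z, s)) (s k0)).symm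
    · exact (m2.comp (by fun_prop : Measurable fun q : ℝ × (Fin p → ℝ) => (q.2 k0 - q.1, q.2))).aemeasurable
  rw [l, r]
  refine lintegral_congr fun t => ?_
  rcases le_or_gt t 0 with ht | ht
  · have e1 : ∀ s : Fin p → ℝ, (krGt k0).indicator h (s k0 + t, s) = 0 := fun s =>
      Set.indicator_of_notMem (fun hs => by have := hs.1; simp only at this; linarith) _
    have e2 : ∀ s : Fin p → ℝ, (krLt k0).indicator (fun q => h (krSw k0 q)) (s k0 - t, s) = 0 := fun s =>
      Set.indicator_of_notMem (fun hs => by have := hs.1; simp only at this; linarith) _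
    simp [e1, e2]
  · have key := hT t ht.le (fun s => h (krSw k0 (s k0 - t, s)))
      (hh.comp ((krSw_meas k0).comp (by fun_prop : Measurable fun s : Fin p → ℝ => (s k0 - t, s))))
    have hm : MeasurableSet {s : Fin p → ℝ | s k0 - t ∈ krDom k0 s} :=
      (by fun_prop : Measurable fun s : Fin p → ℝ => (s k0 - t, s)) (krDom_meas k0)
    rw [← lintegral_indicator hm] at key
    convert key using 1
    · refine lintegral_congr_ae ?_
      filter_upwards [hD] with s hs
      rw [Set.indicator_of_mem]
      · simp [krSw]
      · exact ⟨by simpa using ht, krDom_add hs ht.le⟩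
    · refine lintegral_congr fun s => ?_
      by_cases hs : s k0 - t ∈ krDom k0 s
      · rw [Set.indicator_of_mem (show (s k0 - t, s) ∈ krLt k0 from ⟨by simpa using ht, hs⟩), Set.indicator_of_mem (by exact hs)]
      · rw [Set.indicator_of_notMem (fun h' => hs h'.2), Set.indicator_of_notMem (by exact hs)]

theorem kr_sym {p : ℕ} (k0 : Fin p) (ν : Measure (Fin p → ℝ)) [SFinite ν]
    (hD : ∀ᵐ s ∂ν, s k0 ∈ krDom k0 s)
    (hT : ∀ t : ℝ, 0 ≤ t → ∀ f : (Fin p → ℝ) → ENNReal, Measurable f → ∫⁻ s, f (Function.update s k0 (s k0 + t)) ∂ν =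
      ∫⁻ s in {s | s k0 - t ∈ krDom k0 s}, f s ∂ν)
    (h : ℝ × (Fin p → ℝ) → ENNReal) (hh : Measurable h) :
    ∫⁻ s, (∫⁻ z in krDom k0 s, h (z, s)) ∂ν = ∫⁻ s, (∫⁻ z in krDom k0 s, h (krSw k0 (z, s))) ∂ν := by
  have split : ∀ g : ℝ × (Fin p → ℝ) → ENNReal, Measurable g → ∫⁻ s, (∫⁻ z in krDom k0 s, g (z, s)) ∂ν =
      ∫⁻ s, (∫⁻ z, (krGt k0).indicator g (z, s)) ∂ν + ∫⁻ s, (∫⁻ z, (krLt k0).indicator g (z, s)) ∂ν := by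
    intro g hg
    have m1 : Measurable ((krGt k0).indicator g) := hg.indicator (krGt_meas k0)
    have m2 : Measurable ((krLt k0).indicator g) := hg.indicator (krLt_meas k0)
    rw [← lintegral_add_left]
    · refine lintegral_congr fun s => ?_
      have m3 : Measurable fun z : ℝ => (krGt k0).indicator g (z, s) := m1.comp (by fun_prop : Measurable fun z : ℝ => (z, s))
      rw [← lintegral_add_left m3]
      have hm : MeasurableSet (krDom k0 s) := (by fun_prop : Measurable fun z : ℝ => (z, s)) (krDom_meas k0)
      rw [← lintegral_indicator hm]
      refine lintegral_congr_ae ?_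
      have : ∀ᵐ z : ℝ, z ≠ s k0 := by simp [ae_iff]
      filter_upwards [this] with z hz
      by_cases hzD : z ∈ krDom k0 s
      · rw [Set.indicator_of_mem hzD]
        rcases lt_or_gt_of_ne hz with h1 | h1
        · rw [Set.indicator_of_notMem (fun h' => by have := h'.1; simp only at this; linarith), Set.indicator_of_mem (show (z, s) ∈ krLt k0 from ⟨h1, hzD⟩), zero_add]
        · rw [Set.indicator_of_mem (show (z, s) ∈ krGt k0 from ⟨h1, hzD⟩), Set.indicator_of_notMem (fun h' => by have := h'.1; simp only at this; linarith), add_zero]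
      · rw [Set.indicator_of_notMem hzD, Set.indicator_of_notMem (fun h' => hzD h'.2), Set.indicator_of_notMem (fun h' => hzD h'.2), add_zero]
    · exact (m1.comp measurable_swap).lintegral_prod_right'
  have a1 := kr_sym_half k0 ν hD hT h hh
  have a2 := kr_sym_half k0 ν hD hT (fun q => h (krSw k0 q)) (hh.comp (krSw_meas k0))
  simp only [krSw_krSw] at a2
  rw [split h hh, split (fun q => h (krSw k0 q)) (hh.comp (krSw_meas k0)), a1, a2, add_comm]

noncomputable def KrSys.nu {N p : ℕ} (Q : KrSys N p) (k0 : Fin p) : Measure (Fin p → ℝ) :=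
  Measure.map Q.S ((volume.restrict (Q.A k0)).withDensity fun Y => ENNReal.ofReal (krJ (N - p) k0 (Q.S Y))⁻¹)

theorem krJ_meas (n : ℕ) {p : ℕ} (k0 : Fin p) : Measurable (krJ n k0) := by
  unfold krJ
  fun_prop

instance {N p : ℕ} (Q : KrSys N p) (k0 : Fin p) : SFinite (Q.nu k0) := by
  unfold KrSys.nu; infer_instance

theorem KrSys.lintegral_nu {N p : ℕ} (Q : KrSys N p) (k0 : Fin p) (f : (Fin p → ℝ) → ENNReal) (hf : Measurable f) :
    ∫⁻ s, f s ∂(Q.nu k0) = ∫⁻ Y in Q.A k0, f (Q.S Y) * ENNReal.ofReal (krJ (N - p) k0 (Q.S Y))⁻¹ := by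
  have hJ : Measurable fun Y => ENNReal.ofReal (krJ (N - p) k0 (Q.S Y))⁻¹ := by
    have := (krJ_meas (N - p) k0).comp Q.meas
    exact ENNReal.measurable_ofReal.comp this.inv
  unfold KrSys.nu
  have hfS : Measurable fun Y => f (Q.S Y) := hf.comp Q.meas
  rw [lintegral_map hf Q.meas, lintegral_withDensity_eq_lintegral_mul _ hJ hfS]
  exact lintegral_congr fun Y => mul_comm _ _

theorem KrSys.nu_ae {N p : ℕ} (Q : KrSys N p) (k0 : Fin p) : ∀ᵐ s ∂(Q.nu k0), s k0 ∈ krDom k0 s ∧ ∀ j, 0 ≤ s j := by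
  unfold KrSys.nu
  have hm : MeasurableSet {s : Fin p → ℝ | s k0 ∈ krDom k0 s ∧ ∀ j, 0 ≤ s j} := by
    refine MeasurableSet.inter ((by fun_prop : Measurable fun s : Fin p → ℝ => (s k0, s)) (krDom_meas k0)) ?_
    have : {s : Fin p → ℝ | ∀ j, 0 ≤ s j} = ⋂ j, {s | 0 ≤ s j} := by ext; simp
    change MeasurableSet {s : Fin p → ℝ | ∀ j, 0 ≤ s j}
    rw [this]
    exact MeasurableSet.iInter fun j => measurableSet_le (by fun_prop) (by fun_prop)
  rw [ae_map_iff Q.meas.aemeasurable hm]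
  refine (withDensity_absolutelyContinuous _ _).ae_le ((ae_restrict_iff' (Q.A_meas k0)).2 ?_)
  exact Filter.Eventually.of_forall fun Y hY => ⟨hY, Q.nn Y⟩

theorem KrSys.nu_transport {N p : ℕ} (Q : KrSys N p) (k0 : Fin p) (hk : ∀ k, k0 ≤ k) (t : ℝ) (ht : 0 ≤ t) 
    (f : (Fin p → ℝ) → ENNReal) (hf : Measurable f) : ∫⁻ s, f (Function.update s k0 (s k0 + t)) ∂(Q.nu k0) =
      ∫⁻ s in {s | s k0 - t ∈ krDom k0 s}, f s ∂(Q.nu k0) := by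
  have hm : MeasurableSet {s : Fin p → ℝ | s k0 - t ∈ krDom k0 s} :=
      (by fun_prop : Measurable fun s : Fin p → ℝ => (s k0 - t, s)) (krDom_meas k0)
  have hm' : MeasurableSet {Z | Q.S Z k0 - t ∈ krDom k0 (Q.S Z)} := Q.meas hm
  rw [← lintegral_indicator hm, Q.lintegral_nu k0 _ (hf.indicator hm), 
    Q.lintegral_nu k0 (fun s => f (Function.update s k0 (s k0 + t))) (hf.comp ((kr_update_meas k0).comp (by fun_prop : Measurable fun s : Fin p → ℝ => (s k0 + t, s)))),
    Q.transport k0 hk t ht f, ← lintegral_indicator hm', ← lintegral_indicator (Q.A_meas k0)]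
  refine lintegral_congr fun Y => ?_
  by_cases h1 : Q.S Y k0 - t ∈ krDom k0 (Q.S Y)
  · have h2 : Y ∈ Q.A k0 := by
      have := krDom_add h1 ht
      rwa [sub_add_cancel] at this
    rw [Set.indicator_of_mem (by exact h1), Set.indicator_of_mem h2, Set.indicator_of_mem (by exact h1)]
  · have h3 : {s : Fin p → ℝ | s k0 - t ∈ krDom k0 s}.indicator f (Q.S Y) = 0 := Set.indicator_of_notMem (by exact h1) _
    rw [Set.indicator_of_notMem (by exact h1)]
    by_cases h2 : Y ∈ Q.A k0
    · rw [Set.indicator_of_mem h2, h3, zero_mul]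
    · rw [Set.indicator_of_notMem h2]


theorem krDom_Ioi {p : ℕ} (k0 : Fin p) (s : Fin p → ℝ) :
    ∃ m : ℝ, 0 ≤ m ∧ (∀ j, j ≠ k0 → s j ≤ m) ∧ krDom k0 s = Set.Ioi m := by
  have hne : (Finset.univ : Finset (Fin p)).Nonempty := ⟨k0, Finset.mem_univ _⟩
  refine ⟨Finset.univ.sup' hne (fun j => if j = k0 then 0 else s j), ?_, ?_, ?_⟩
  · have := Finset.le_sup' (f := fun j => if j = k0 then 0 else s j) (Finset.mem_univ k0)
    simp only [if_true] at this
    exact this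
  · intro j hj
    have := Finset.le_sup' (f := fun j => if j = k0 then 0 else s j) (Finset.mem_univ j)
    simp only [hj, if_false] at this
    exact this
  · ext z
    simp only [krDom, Set.mem_ofPred_eq, Set.mem_Ioi, Finset.sup'_lt_iff, Finset.mem_univ, true_implies]
    constructor
    · intro h j
      split_ifs with hj
      · exact h.1
      · exact h.2 j hj
    · intro h
      refine ⟨by simpa using h k0, fun j hj => by simpa [hj] using h j⟩

theorem kr_1d (q : ℝ → ℝ) (hq : Continuous q) (hi : Integrable q) (m : ℝ) (hpos : ∀ z, m < z → 0 < q z) :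
    0 < (∫ z in Set.Ioi m, q z) ∧
    ∀ B : Set ℝ, MeasurableSet B → ∫⁻ z in Set.Ioi m, B.indicator 1 ((∫ x in Set.Ioi z, q x) / (∫ x in Set.Ioi m, q x)) *
      ENNReal.ofReal (q z / (∫ x in Set.Ioi m, q x)) = volume (B ∩ Set.Ioo 0 1) := by
  set G : ℝ → ℝ := fun z => ∫ x in Set.Ioi z, q x with hG
  have hsplit : ∀ a b, G a = (∫ x in a..b, q x) + G b := fun a b =>
    (intervalIntegral.integral_interval_add_Ioi hi.integrableOn hi.integrableOn).symm
  have hlt : ∀ a b, m ≤ a → a < b → G b < G a := by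
    intro a b ha hab
    have := intervalIntegral.intervalIntegral_pos_of_pos_on (hq.intervalIntegrable a b) (fun x hx => hpos x (ha.trans_lt hx.1)) hab
    have := hsplit a b
    linarith
  have hGn : ∀ z, m ≤ z → 0 ≤ G z := fun z hz => setIntegral_nonneg measurableSet_Ioi fun x hx => (hpos x (hz.trans_lt hx)).le
  have hGp : ∀ z, m ≤ z → 0 < G z := fun z hz => (hGn (z + 1) (by linarith)).trans_lt (hlt z (z + 1) hz (by linarith))
  have hG0 : 0 < G m := hGp m le_rfl
  refine ⟨hG0, fun B hB => ?_⟩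
  have hder : ∀ z ∈ Set.Ioi m, HasDerivWithinAt (fun z => G z / G m) (-(q z) / G m) (Set.Ioi m) z := by
    intro z _
    have h1 : G = fun z => G m - ∫ x in m..z, q x := by
      funext z; have := hsplit m z; linarith
    have h2 : HasDerivAt G (-(q z)) z := by
      rw [h1]
      exact ((hq.integral_hasStrictDerivAt m z).hasDerivAt).const_sub _
    exact (h2.div_const _).hasDerivWithinAt
  have hinj : Set.InjOn (fun z => G z / G m) (Set.Ioi m) := by
    intro a ha b hb hab
    have h1 : G a = G b := by
      field_simp at hab
      exact hab
    rcases lt_trichotomy a b with h | h | h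
    · have := hlt a b (le_of_lt ha) h; linarith
    · exact h
    · have := hlt b a (le_of_lt hb) h; linarith
  have hcv := fun g : ℝ → ENNReal => lintegral_image_eq_lintegral_abs_deriv_mul measurableSet_Ioi hder hinj g
  have habs : ∀ z ∈ Set.Ioi m, |-(q z) / G m| = q z / G m := fun z hz => by
    rw [neg_div, abs_neg, abs_of_pos (div_pos (hpos z hz) hG0)]
  set I := (fun z => G z / G m) '' Set.Ioi m with hI
  have hsub : I ⊆ Set.Ioo 0 1 := by
    rintro _ ⟨z, hz, rfl⟩
    exact ⟨div_pos (hGp z (le_of_lt hz)) hG0, (div_lt_one hG0).2 (hlt m z le_rfl hz)⟩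
  have hvol : volume I = 1 := by
    have := hcv 1
    simp only [Pi.one_apply, mul_one, lintegral_const, one_mul, Measure.restrict_apply, MeasurableSet.univ, Set.univ_inter] at this
    rw [this, setLIntegral_congr_fun (g := fun z => ENNReal.ofReal (q z / G m)) measurableSet_Ioi (fun z hz => by simp only [habs z hz]),
      ← ofReal_integral_eq_lintegral_ofReal (hi.integrableOn.div_const _)]
    · rw [integral_div, div_self hG0.ne', ENNReal.ofReal_one]
    · rw [Filter.EventuallyLE, ae_restrict_iff' measurableSet_Ioi]
      exact Filter.Eventually.of_forall fun z hz => (div_pos (hpos z hz) hG0).le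
  have hae : I =ᵐ[volume] Set.Ioo (0:ℝ) 1 := by
    refine ae_eq_of_subset_of_measure_ge hsub ?_ ?_ ?_
    · rw [hvol]; simp
    · exact ((measurable_image_of_fderivWithin measurableSet_Ioi (fun x hx => (hder x hx).hasFDerivWithinAt) hinj)).nullMeasurableSet
    · simp
  have h3 := hcv (B.indicator 1)
  rw [← setLIntegral_congr_fun (f := fun z => B.indicator 1 (G z / G m) * ENNReal.ofReal (q z / G m)) measurableSet_Ioi
    (fun z hz => by simp only [habs z hz]; rw [mul_comm])] at h3
  rw [← h3, setLIntegral_congr hae, lintegral_indicator_one hB, Measure.restrict_apply hB]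

theorem kr_poly_int (b : ℝ) (hb : 0 < b) (P : Polynomial ℝ) : Integrable fun z : ℝ => P.eval z * Real.exp (-b * z ^ 2) := by
  induction P using Polynomial.induction_on' with
  | add p q hp hq =>
    simp only [Polynomial.eval_add, add_mul]
    exact hp.add hq
  | monomial n a =>
    have hn : (-1 : ℝ) < n := by
      have : (0:ℝ) ≤ n := n.cast_nonneg
      linarith
    have := (integrable_rpow_mul_exp_neg_mul_sq hb (s := n) hn).const_mul a
    simpa [mul_assoc] using this

noncomputable def krq (σ : ℝ) (n : ℕ) {p : ℕ} (k0 : Fin p) (s : Fin p → ℝ) (z : ℝ) : ℝ :=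
  Real.exp (-(z ^ 2) / (2 * σ ^ 2)) * z ^ n * ∏ j ∈ Finset.univ.erase k0, (z ^ 2 - s j ^ 2)

theorem krq_cont (σ : ℝ) (n : ℕ) {p : ℕ} (k0 : Fin p) (s : Fin p → ℝ) : Continuous (krq σ n k0 s) := by
  unfold krq; fun_prop

theorem krq_meas (σ : ℝ) (n : ℕ) {p : ℕ} (k0 : Fin p) : Measurable (fun x : ℝ × (Fin p → ℝ) => krq σ n k0 x.2 x.1) := by
  unfold krq
  fun_prop

theorem krq_int (σ : ℝ) (hσ : 0 < σ) (n : ℕ) {p : ℕ} (k0 : Fin p) (s : Fin p → ℝ) : Integrable (krq σ n k0 s) := by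
  have := kr_poly_int (1 / (2 * σ ^ 2)) (by positivity)
    (Polynomial.X ^ n * ∏ j ∈ Finset.univ.erase k0, (Polynomial.X ^ 2 - Polynomial.C (s j ^ 2)))
  convert this using 2 with z
  simp only [krq, Polynomial.eval_mul, Polynomial.eval_pow, Polynomial.eval_X, Polynomial.eval_prod, Polynomial.eval_sub, Polynomial.eval_C]
  rw [show -(z ^ 2) / (2 * σ ^ 2) = -(1 / (2 * σ ^ 2)) * z ^ 2 by ring]
  ring

theorem krq_pos (σ : ℝ) (n : ℕ) {p : ℕ} (k0 : Fin p) (s : Fin p → ℝ) (h0 : ∀ j, 0 ≤ s j) (z : ℝ) (hz : z ∈ krDom k0 s) :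
    0 < krq σ n k0 s z := by
  unfold krq
  refine mul_pos (mul_pos (Real.exp_pos _) (pow_pos hz.1 _)) (Finset.prod_pos fun j hj => ?_)
  have := pow_lt_pow_left₀ (hz.2 j (Finset.ne_of_mem_erase hj)) (h0 j) two_ne_zero
  linarith

theorem krq_update (σ : ℝ) (n : ℕ) {p : ℕ} (k0 : Fin p) (s : Fin p → ℝ) (w : ℝ) : krq σ n k0 (Function.update s k0 w) = krq σ n k0 s := by
  funext z
  unfold krq
  congr 1
  exact Finset.prod_congr rfl fun j hj => by simp [Finset.ne_of_mem_erase hj]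

noncomputable def krG0 (σ : ℝ) (n : ℕ) {p : ℕ} (k0 : Fin p) (s : Fin p → ℝ) : ℝ := ∫ z in krDom k0 s, krq σ n k0 s z
noncomputable def krG (σ : ℝ) (n : ℕ) {p : ℕ} (k0 : Fin p) (s : Fin p → ℝ) (w : ℝ) : ℝ := ∫ z in Set.Ioi w, krq σ n k0 s z

noncomputable def krStat (σ : ℝ) (n : ℕ) {p : ℕ} (k0 : Fin p) (s : Fin p → ℝ) : ℝ := krG σ n k0 s (s k0) / krG0 σ n k0 s

theorem krG0_meas (σ : ℝ) (n : ℕ) {p : ℕ} (k0 : Fin p) : Measurable (krG0 σ n k0) := by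
  have : krG0 σ n k0 = fun s => ∫ z, ({q : ℝ × (Fin p → ℝ) | q.1 ∈ krDom k0 q.2}.indicator (fun x => krq σ n k0 x.2 x.1)) (z, s) := by
    funext s
    have hm : MeasurableSet (krDom k0 s) := (by fun_prop : Measurable fun z : ℝ => (z, s)) (krDom_meas k0)
    unfold krG0
    rw [← integral_indicator hm]
    rfl
  rw [this]
  exact (((krq_meas σ n k0).indicator (krDom_meas k0)).comp measurable_swap).stronglyMeasurable.integral_prod_right'.measurable

theorem krGtop_meas (σ : ℝ) (n : ℕ) {p : ℕ} (k0 : Fin p) : Measurable (fun s => krG σ n k0 s (s k0)) := by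
  have : (fun s => krG σ n k0 s (s k0)) = fun s => ∫ z, ({q : ℝ × (Fin p → ℝ) | q.2 k0 < q.1}.indicator (fun x => krq σ n k0 x.2 x.1)) (z, s) := by
    funext s
    unfold krG
    rw [← integral_indicator measurableSet_Ioi]
    rfl
  rw [this]
  have hm : MeasurableSet {q : ℝ × (Fin p → ℝ) | q.2 k0 < q.1} := measurableSet_lt (by fun_prop) (by fun_prop)
  exact (((krq_meas σ n k0).indicator hm).comp measurable_swap).stronglyMeasurable.integral_prod_right'.measurable

theorem krStat_meas (σ : ℝ) (n : ℕ) {p : ℕ} (k0 : Fin p) : Measurable (krStat σ n k0) :=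
  (krGtop_meas σ n k0).div (krG0_meas σ n k0)


noncomputable def krW (c σ : ℝ) {p : ℕ} (k0 : Fin p) (s : Fin p → ℝ) : ℝ :=
  c * Real.exp (-(∑ j ∈ Finset.univ.erase k0, s j ^ 2) / (2 * σ ^ 2))

theorem krW_meas (c σ : ℝ) {p : ℕ} (k0 : Fin p) : Measurable (krW c σ k0) := by
  unfold krW
  fun_prop

theorem krW_update (c σ : ℝ) {p : ℕ} (k0 : Fin p) (s : Fin p → ℝ) (w : ℝ) : krW c σ k0 (Function.update s k0 w) = krW c σ k0 s := by
  unfold krW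
  have : ∑ j ∈ Finset.univ.erase k0, Function.update s k0 w j ^ 2 = ∑ j ∈ Finset.univ.erase k0, s j ^ 2 :=
    Finset.sum_congr rfl fun j hj => by simp [Finset.ne_of_mem_erase hj]
  rw [this]

theorem kr_dens (c σ : ℝ) (hc : 0 < c) (n : ℕ) {p : ℕ} (k0 : Fin p) (s : Fin p → ℝ) (h0 : ∀ j, 0 ≤ s j) (h : s k0 ∈ krDom k0 s) :
    ENNReal.ofReal (c * Real.exp (-(∑ j, s j ^ 2) / (2 * σ ^ 2))) =
    ENNReal.ofReal (krW c σ k0 s) * ENNReal.ofReal (krq σ n k0 s (s k0)) * ENNReal.ofReal (krJ n k0 s)⁻¹ := by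
  have hJ := krJ_pos n k0 s h0 h
  have hW : 0 ≤ krW c σ k0 s := mul_nonneg hc.le (Real.exp_pos _).le
  have hq := krq_pos σ n k0 s h0 _ h
  rw [← ENNReal.ofReal_mul hW, ← ENNReal.ofReal_mul (mul_nonneg hW hq.le)]
  congr 1
  have hq' : krq σ n k0 s (s k0) = Real.exp (-(s k0 ^ 2) / (2 * σ ^ 2)) * krJ n k0 s := by
    unfold krq krJ; ring
  rw [hq', ← Finset.add_sum_erase _ _ (Finset.mem_univ k0), neg_add, add_div, Real.exp_add]
  unfold krW
  field_simp

theorem kr_inner (σ : ℝ) (hσ : 0 < σ) (n : ℕ) {p : ℕ} (k0 : Fin p) (s : Fin p → ℝ) (h0 : ∀ j, 0 ≤ s j) (B : Set ℝ) (hB : MeasurableSet B) :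
    ∫⁻ z in krDom k0 s, B.indicator 1 (krG σ n k0 s z / krG0 σ n k0 s) * ENNReal.ofReal (krq σ n k0 s z / krG0 σ n k0 s) = volume (B ∩ Set.Ioo 0 1) := by
  obtain ⟨m, -, -, hm⟩ := krDom_Ioi k0 s
  have := (kr_1d (krq σ n k0 s) (krq_cont σ n k0 s) (krq_int σ hσ n k0 s) m
    (fun z hz => krq_pos σ n k0 s h0 z (by rw [hm]; exact hz))).2 B hB
  unfold krG krG0
  rw [hm]
  exact this

theorem kr_mW (c σ : ℝ) {p : ℕ} (k0 : Fin p) : Measurable fun s => ENNReal.ofReal (krW c σ k0 s) :=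
  (krW_meas c σ k0).ennreal_ofReal

theorem kr_mq (σ : ℝ) (n : ℕ) {p : ℕ} (k0 : Fin p) :
    Measurable fun s : Fin p → ℝ => ENNReal.ofReal (krq σ n k0 s (s k0)) := by
  refine Measurable.ennreal_ofReal ?_
  unfold krq
  fun_prop

theorem kr_mWq (c σ : ℝ) (n : ℕ) {p : ℕ} (k0 : Fin p) : Measurable fun s : Fin p → ℝ =>
    ENNReal.ofReal (krW c σ k0 s) * ENNReal.ofReal (krq σ n k0 s (s k0)) :=
  (kr_mW c σ k0).mul (kr_mq σ n k0)

theorem kr_mr (σ : ℝ) (n : ℕ) {p : ℕ} (k0 : Fin p) :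
    Measurable fun x : ℝ × (Fin p → ℝ) => ENNReal.ofReal (krq σ n k0 x.2 x.1 / krG0 σ n k0 x.2) :=
  ((krq_meas σ n k0).div ((krG0_meas σ n k0).comp measurable_snd)).ennreal_ofReal

theorem kr_mBs (σ : ℝ) (n : ℕ) {p : ℕ} (k0 : Fin p) (B : Set ℝ) (hB : MeasurableSet B) :
    Measurable fun s => B.indicator (1 : ℝ → ENNReal) (krStat σ n k0 s) :=
  (measurable_one.indicator hB).comp (krStat_meas σ n k0)

/-- reduction of a Gaussian integral to an integral against `nu` -/
theorem kr_red {N p : ℕ} (Q : KrSys N p) (k0 : Fin p) (hk : ∀ k, k0 ≤ k) (c σ : ℝ) (hc : 0 < c)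
    (F : (Fin p → ℝ) → ENNReal) (hF : Measurable F) :
      ∫⁻ Y, F (Q.S Y) * ENNReal.ofReal (c * Real.exp (-(∑ i, ∑ j, Y i j ^ 2) / (2 * σ ^ 2))) =
      ∫⁻ s, F s * (ENNReal.ofReal (krW c σ k0 s) * ENNReal.ofReal (krq σ (N - p) k0 s (s k0))) ∂(Q.nu k0) := by
  have hFm : Measurable fun s => F s * (ENNReal.ofReal (krW c σ k0 s) * ENNReal.ofReal (krq σ (N - p) k0 s (s k0))) :=
    hF.mul (kr_mWq c σ (N - p) k0)
  rw [Q.lintegral_nu k0 _ hFm]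
  have hA : ∀ᵐ Y : Fin N → Fin p → ℝ, Y ∈ Q.A k0 := Q.ae k0 hk
  have hvol := Measure.restrict_eq_self_of_ae_mem hA
  conv_lhs => rw [← hvol]
  refine setLIntegral_congr_fun (Q.A_meas k0) fun Y hY => ?_
  rw [Q.frob Y, kr_dens c σ hc (N - p) k0 (Q.S Y) (Q.nn Y) hY]
  ring

noncomputable def krh (c σ : ℝ) (n : ℕ) {p : ℕ} (k0 : Fin p) (B : Set ℝ) : ℝ × (Fin p → ℝ) → ENNReal :=
  fun x => (B.indicator 1 (krStat σ n k0 x.2) *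
    (ENNReal.ofReal (krW c σ k0 x.2) * ENNReal.ofReal (krq σ n k0 x.2 (x.2 k0)))) *
    ENNReal.ofReal (krq σ n k0 x.2 x.1 / krG0 σ n k0 x.2)

theorem krh_meas (c σ : ℝ) (n : ℕ) {p : ℕ} (k0 : Fin p) (B : Set ℝ) (hB : MeasurableSet B) :
    Measurable (krh c σ n k0 B) :=
  (((kr_mBs σ n k0 B hB).mul (kr_mWq c σ n k0)).comp measurable_snd).mul (kr_mr σ n k0)

theorem kr_hl (c σ : ℝ) (hσ : 0 < σ) (n : ℕ) {p : ℕ} (k0 : Fin p) (B : Set ℝ)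
    (s : Fin p → ℝ) (h0 : ∀ j, 0 ≤ s j) :
    ∫⁻ z in krDom k0 s, krh c σ n k0 B (z, s) = B.indicator 1 (krStat σ n k0 s) *
      (ENNReal.ofReal (krW c σ k0 s) * ENNReal.ofReal (krq σ n k0 s (s k0))) := by
  have := kr_inner σ hσ n k0 s h0 Set.univ MeasurableSet.univ
  simp only [Set.indicator_univ, Pi.one_apply, one_mul, Set.univ_inter, Real.volume_Ioo, sub_zero, ENNReal.ofReal_one] at this
  simp only [krh]
  have hm : Measurable fun z : ℝ => ENNReal.ofReal (krq σ n k0 s z / krG0 σ n k0 s) :=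
    ((krq_cont σ n k0 s).measurable.div_const _).ennreal_ofReal
  rw [lintegral_const_mul _ hm, this, mul_one]

theorem kr_hr (c σ : ℝ) (hσ : 0 < σ) (n : ℕ) {p : ℕ} (k0 : Fin p) (B : Set ℝ) (hB : MeasurableSet B)
    (s : Fin p → ℝ) (h0 : ∀ j, 0 ≤ s j) :
    ∫⁻ z in krDom k0 s, krh c σ n k0 B (krSw k0 (z, s)) = volume (B ∩ Set.Ioo 0 1) *
      (ENNReal.ofReal (krW c σ k0 s) * ENNReal.ofReal (krq σ n k0 s (s k0))) := by
  have hG0 : 0 < krG0 σ n k0 s := by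
    obtain ⟨m, -, -, hm⟩ := krDom_Ioi k0 s
    have := (kr_1d (krq σ n k0 s) (krq_cont σ n k0 s) (krq_int σ hσ n k0 s) m
      (fun z hz => krq_pos σ n k0 s h0 z (by rw [hm]; exact hz))).1
    unfold krG0
    rwa [hm]
  have hm : MeasurableSet (krDom k0 s) := (by fun_prop : Measurable fun z : ℝ => (z, s)) (krDom_meas k0)
  have hG0u : ∀ z, krG0 σ n k0 (Function.update s k0 z) = krG0 σ n k0 s := fun z => by
    unfold krG0; rw [krDom_update, krq_update]
  have hst : ∀ z, krStat σ n k0 (Function.update s k0 z) = krG σ n k0 s z / krG0 σ n k0 s := fun z => by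
    unfold krStat; rw [hG0u]; unfold krG; rw [krq_update]; simp
  rw [← kr_inner σ hσ n k0 s h0 B hB, mul_comm, ← lintegral_const_mul']
  · refine setLIntegral_congr_fun hm fun z hz => ?_
    simp only [krh, krSw, hst, hG0u, krq_update, krW_update, Function.update_self]
    rw [ENNReal.ofReal_div_of_pos hG0, ENNReal.ofReal_div_of_pos hG0]
    simp only [div_eq_mul_inv]
    ring
  · exact ENNReal.mul_ne_top ENNReal.ofReal_ne_top ENNReal.ofReal_ne_top

theorem kr_main {N p : ℕ} (Q : KrSys N p) (k0 : Fin p) (hk : ∀ k, k0 ≤ k) (c σ : ℝ) (hc : 0 < c) (hσ : 0 < σ)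
    (B : Set ℝ) (hB : MeasurableSet B) :
    ∫⁻ Y, B.indicator 1 (krStat σ (N - p) k0 (Q.S Y)) * ENNReal.ofReal (c * Real.exp (-(∑ i, ∑ j, Y i j ^ 2) / (2 * σ ^ 2))) =
    volume (B ∩ Set.Ioo 0 1) * ∫⁻ Y : Fin N → Fin p → ℝ, ENNReal.ofReal (c * Real.exp (-(∑ i, ∑ j, Y i j ^ 2) / (2 * σ ^ 2))) := by
  have hnu := Q.nu_ae k0
  have h1 := kr_red Q k0 hk c σ hc _ (kr_mBs σ (N - p) k0 B hB)
  have h2 := kr_red Q k0 hk c σ hc (fun _ => 1) measurable_const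
  simp only [one_mul] at h2
  rw [h1, h2]
  have hsym := kr_sym k0 (Q.nu k0) (hnu.mono fun s hs => hs.1)
    (fun t ht f hf => Q.nu_transport k0 hk t ht f hf) _ (krh_meas c σ (N - p) k0 B hB)
  rw [← lintegral_const_mul _ (kr_mWq c σ (N - p) k0)]
  calc _ = ∫⁻ s, (∫⁻ z in krDom k0 s, krh c σ (N - p) k0 B (z, s)) ∂(Q.nu k0) :=
        lintegral_congr_ae (hnu.mono fun s hs => (kr_hl c σ hσ (N - p) k0 B s hs.2).symm)
    _ = _ := hsym
    _ = _ := lintegral_congr_ae (hnu.mono fun s hs => kr_hr c σ hσ (N - p) k0 B hB s hs.2)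

/-- **The Kac–Rice global null test statistic is uniform (Section 2.1.1).**
Let `Y ∈ ℝ^{N×p}` (`N > p ≥ 1`) have i.i.d. `N(0,σ²)` entries (i.e. `B = 0`, the global
null), and let `d 0 ≥ d 1 ≥ ⋯ ≥ d (p-1) ≥ 0` be its (measurably chosen) singular values,
characterized by an SVD `Y = U D Vᵀ`.  Then
`S_{1,0} = (∫_{d₁}^∞ e^{-z²/(2σ²)} z^{N-p} ∏_{j=2}^p (z²-d_j²) dz) /
          (∫_{d₂}^∞ e^{-z²/(2σ²)} z^{N-p} ∏_{j=2}^p (z²-d_j²) dz)`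
is uniform on `(0,1)`.  The lower limit `d₂` of the denominator is encoded (using `d ≥ 0`)
by the condition `0 < z ∧ ∀ j ≥ 1 (zero-based), d j < z`. -/
theorem kac_rice_global_null_uniform
    (N p : ℕ) (hNp : p < N) (hp : 1 ≤ p)
    (σ : ℝ) (hσ : 0 < σ)
    {Ω : Type} [MeasurableSpace Ω] (P : Measure Ω) [IsProbabilityMeasure P]
    (Y : Ω → Fin N → Fin p → ℝ) (d : Ω → Fin p → ℝ)
    (hYm : Measurable Y) (hdm : Measurable d)
    (hlaw : Measure.map Y P =
      Measure.pi (fun _ : Fin N => Measure.pi (fun _ : Fin p =>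
        gaussianReal 0 ⟨σ ^ 2, sq_nonneg σ⟩)))
    (hSVD : ∀ ω, ∃ U : Matrix (Fin N) (Fin p) ℝ, ∃ V : Matrix (Fin p) (Fin p) ℝ,
      Matrix.of (Y ω) = U * Matrix.diagonal (d ω) * Vᵀ ∧ Uᵀ * U = 1 ∧ Vᵀ * V = 1)
    (hanti : ∀ ω, Antitone (d ω))
    (hnonneg : ∀ ω i, 0 ≤ d ω i) :
    Measure.map (fun ω =>
      (∫ z in Set.Ioi (d ω ⟨0, by omega⟩),
        Real.exp (-(z ^ 2) / (2 * σ ^ 2)) * z ^ (N - p) *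
          ∏ j ∈ Finset.univ.erase (⟨0, by omega⟩ : Fin p), (z ^ 2 - d ω j ^ 2)) /
      (∫ z in {z : ℝ | 0 < z ∧ ∀ j : Fin p, 1 ≤ (j : ℕ) → d ω j < z},
        Real.exp (-(z ^ 2) / (2 * σ ^ 2)) * z ^ (N - p) *
          ∏ j ∈ Finset.univ.erase (⟨0, by omega⟩ : Fin p), (z ^ 2 - d ω j ^ 2))) P
      = volume.restrict (Set.Ioo (0 : ℝ) 1) := by
  obtain ⟨Q⟩ := kr_sys_exists hNp.le
  obtain ⟨c, hc, hg⟩ := kr_gauss N p σ hσ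
  set k0 : Fin p := ⟨0, by omega⟩ with hk0
  have hk : ∀ k, k0 ≤ k := fun k => Fin.mk_le_of_le_val (Nat.zero_le _)
  have hd : ∀ ω, d ω = Q.S (Y ω) := by
    intro ω
    obtain ⟨U, V, h1, h2, h3⟩ := hSVD ω
    exact kr_sv_unique (kr_thin_sv (hanti ω) (hnonneg ω) h1 h2 h3) (Q.sv (Y ω))
  have hdom : ∀ s : Fin p → ℝ, {z : ℝ | 0 < z ∧ ∀ j : Fin p, 1 ≤ (j : ℕ) → s j < z} = krDom k0 s := by
    intro s
    ext z
    simp only [krDom, Set.mem_ofPred_eq]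
    refine and_congr Iff.rfl (forall_congr' fun j => ?_)
    have : 1 ≤ (j : ℕ) ↔ j ≠ k0 := by
      rw [Ne, Fin.ext_iff, hk0]; simp only; omega
    rw [this]
  have hfun : (fun ω =>
      (∫ z in Set.Ioi (d ω k0),
        Real.exp (-(z ^ 2) / (2 * σ ^ 2)) * z ^ (N - p) *
          ∏ j ∈ Finset.univ.erase k0, (z ^ 2 - d ω j ^ 2)) /
      (∫ z in {z : ℝ | 0 < z ∧ ∀ j : Fin p, 1 ≤ (j : ℕ) → d ω j < z},
        Real.exp (-(z ^ 2) / (2 * σ ^ 2)) * z ^ (N - p) *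
          ∏ j ∈ Finset.univ.erase k0, (z ^ 2 - d ω j ^ 2))) =
      (fun y => krStat σ (N - p) k0 (Q.S y)) ∘ Y := by
    funext ω
    rw [hdom, hd ω]
    rfl
  have hms : Measurable fun y => krStat σ (N - p) k0 (Q.S y) := (krStat_meas σ (N - p) k0).comp Q.meas
  have hmd : Measurable fun y : Fin N → Fin p → ℝ => ENNReal.ofReal (c * Real.exp (-(∑ i, ∑ j, y i j ^ 2) / (2 * σ ^ 2))) := by
    fun_prop
  rw [hfun, ← Measure.map_map hms hYm, hlaw, hg]
  have hone : ∫⁻ y : Fin N → Fin p → ℝ, ENNReal.ofReal (c * Real.exp (-(∑ i, ∑ j, y i j ^ 2) / (2 * σ ^ 2))) = 1 := by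
    rw [← setLIntegral_univ, ← withDensity_apply _ MeasurableSet.univ, ← hg, ← hlaw, Measure.map_apply hYm MeasurableSet.univ]
    simp
  ext B hB
  rw [Measure.map_apply hms hB, withDensity_apply _ (hms hB), Measure.restrict_apply hB]
  have := kr_main Q k0 hk c σ hc hσ B hB
  rw [hone, mul_one] at this
  rw [← this, ← lintegral_indicator (hms hB)]
  refine lintegral_congr fun y => ?_
  by_cases hy : krStat σ (N - p) k0 (Q.S y) ∈ B
  · rw [Set.indicator_of_mem (by exact hy), Set.indicator_of_mem hy]; simp
  · rw [Set.indicator_of_notMem (by exact hy), Set.indicator_of_notMem hy]; simp
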